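/- arXiv:2305.07621 — 4 statements merged into one kernel-verified Lean document; each statement's English description precedes it below -/
import Mathlib

section
/- Let K be a continuum in a metric space X with finite Hausdorff 1-measure H^1(K) < ∞. Then there exists a continuous surjective curve γ : [0,1] → K with length ℓ(γ) ≤ 2·H^1(K) − diam(K). -/
open MeasureTheory Set Filter Topology

theorem H1_ball {X : Type*} [MetricSpace X] [MeasurableSpace X] [BorelSpace X] {K : Set X}
    (hK : IsPreconnected K) {x z : X} (hx : x ∈ K) (hz : z ∈ K) {r : ℝ} (hr : r ≤ dist x z) :
    ENNReal.ofReal r ≤ μH[1] (K ∩ Metric.ball x r) := by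
  have hg : LipschitzWith 1 (fun y => dist x y) := LipschitzWith.dist_right x
  have hsub : Ico 0 r ⊆ (fun y => dist x y) '' (K ∩ Metric.ball x r) := by
    intro u hu
    have := hK.intermediate_value hx hz hg.continuous.continuousOn
    have h2 : u ∈ Icc (dist x x) (dist x z) := by
      rw [dist_self]; exact ⟨hu.1, hu.2.le.trans hr⟩
    obtain ⟨y, hy, hyu⟩ := this h2
    refine ⟨y, ⟨hy, ?_⟩, hyu⟩
    rw [Metric.mem_ball, dist_comm]; simp only at hyu; rw [hyu]; exact hu.2
  calc ENNReal.ofReal r = volume (Ico 0 r) := by simp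
    _ = μH[1] (Ico 0 r) := by rw [hausdorffMeasure_real]
    _ ≤ μH[1] ((fun y => dist x y) '' (K ∩ Metric.ball x r)) := measure_mono hsub
    _ ≤ _ := by
      have := hg.hausdorffMeasure_image_le (d := 1) zero_le_one (K ∩ Metric.ball x r)
      simpa using this

theorem H1_dist {X : Type*} [MetricSpace X] [MeasurableSpace X] [BorelSpace X] {K : Set X}
    (hK : IsPreconnected K) {x z : X} (hx : x ∈ K) (hz : z ∈ K) :
    ENNReal.ofReal (dist x z) ≤ μH[1] K :=
  (H1_ball hK hx hz le_rfl).trans (measure_mono inter_subset_left)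

theorem exists_chain {X : Type*} [MetricSpace X] {K : Set X}
    (hK : IsPreconnected K) {x y : X} (hx : x ∈ K) (hy : y ∈ K) {ε : ℝ} (hε : 0 < ε) :
    ∃ N : ℕ, ∃ p : ℕ → X, p 0 = x ∧ p N = y ∧ (∀ i, p i ∈ K) ∧
      ∀ i < N, dist (p i) (p (i+1)) < ε := by
  have key := hK.induction₂ (fun x y => x ∈ K → y ∈ K → ∃ N : ℕ, ∃ p : ℕ → X, p 0 = x ∧ p N = y ∧ (∀ i, p i ∈ K) ∧
      ∀ i < N, dist (p i) (p (i+1)) < ε) ?_ ?_ ?_ hx hy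
  · exact key hx hy
  · intro x hx
    have : Metric.ball x ε ∈ 𝓝[K] x := mem_nhdsWithin_of_mem_nhds (Metric.ball_mem_nhds x hε)
    filter_upwards [this] with y hy hx hyK
    refine ⟨1, fun i => if i = 0 then x else y, by simp, by simp, ?_, ?_⟩
    · intro i; dsimp only; split_ifs <;> assumption
    · intro i hi
      obtain rfl : i = 0 := by omega
      simpa [dist_comm] using hy
  · intro x y z hx hy hz h1 h2 _ _
    obtain ⟨N, p, p0, pN, pK, pd⟩ := h1 hx hy
    obtain ⟨M, q, q0, qM, qK, qd⟩ := h2 hy hz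
    refine ⟨N + M, fun i => if i ≤ N then p i else q (i - N), by simp [p0], ?_, ?_, ?_⟩
    · dsimp only; split_ifs with h
      · obtain rfl : M = 0 := by omega
        simp [pN, ← qM, q0]
      · simp [qM]
    · intro i; dsimp only; split_ifs
      · exact pK _
      · exact qK _
    · intro i hi; dsimp only
      split_ifs with h1 h2 h3
      · exact pd _ (by omega)
      · obtain rfl : i = N := by omega
        have := qd 0 (by omega)
        rw [q0] at this
        simpa [pN] using this
      · omega
      · have := qd (i - N) (by omega)
        rwa [show i - N + 1 = i + 1 - N by omega] at this
  · intro x y hx hy h _ _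
    obtain ⟨N, p, p0, pN, pK, pd⟩ := h hx hy
    refine ⟨N, fun i => p (N - i), by simp [pN], by simp [p0], fun i => pK _, ?_⟩
    intro i hi
    have := pd (N - (i+1)) (by omega)
    rw [show N - (i+1) + 1 = N - i by omega, dist_comm] at this
    exact this

theorem exists_short_chain {X : Type*} [MetricSpace X] [MeasurableSpace X] [BorelSpace X]
    {K : Set X} (hK : IsPreconnected K) (hfin : μH[1] K < ⊤)
    {x y : X} (hx : x ∈ K) (hy : y ∈ K) {ε : ℝ} (hε : 0 < ε) :
    ∃ N : ℕ, ∃ p : ℕ → X, p 0 = x ∧ p N = y ∧ (∀ i, p i ∈ K) ∧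
      (∀ i < N, dist (p i) (p (i+1)) < ε) ∧ N * ε ≤ 4 * (μH[1] K).toReal + ε := by
  classical
  have hex := exists_chain hK hx hy hε
  let N := Nat.find hex
  obtain ⟨p, p0, pN, pK, pd⟩ : ∃ p : ℕ → X, p 0 = x ∧ p N = y ∧ (∀ i, p i ∈ K) ∧
      ∀ i < N, dist (p i) (p (i+1)) < ε := Nat.find_spec hex
  have hmin : ∀ M < N, ¬ ∃ p : ℕ → X, p 0 = x ∧ p M = y ∧ (∀ i, p i ∈ K) ∧
      ∀ i < M, dist (p i) (p (i+1)) < ε := fun M hM => Nat.find_min hex hM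
  clear_value N
  have hfar : ∀ i j, i + 2 ≤ j → j ≤ N → ε ≤ dist (p i) (p j) := by
    intro i j hij hj
    by_contra hlt
    push Not at hlt
    apply hmin (N - (j - i - 1)) (by omega)
    refine ⟨fun k => if k ≤ i then p k else p (k + (j - i - 1)), by simp [p0], ?_, ?_, ?_⟩
    · dsimp only
      rw [if_neg (by omega), ← pN]
      congr 1; omega
    · intro k; dsimp only; split_ifs <;> exact pK _
    · intro k hk
      dsimp only
      split_ifs with h1 h2 h3
      · exact pd _ (by omega)
      · obtain rfl : k = i := by omega
        rwa [show k + 1 + (j - k - 1) = j by omega]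
      · omega
      · have := pd (k + (j - i - 1)) (by omega)
        rwa [show k + (j - i - 1) + 1 = k + 1 + (j - i - 1) by omega] at this
  refine ⟨N, p, p0, pN, pK, pd, ?_⟩
  have hH : 0 ≤ (μH[1] K).toReal := ENNReal.toReal_nonneg
  rcases Nat.lt_or_ge N 2 with h2 | h2
  · have : (N : ℝ) ≤ 1 := by exact_mod_cast (by omega : N ≤ 1)
    nlinarith
  have hxy : ε ≤ dist x y := by
    have := hfar 0 N (by omega) le_rfl
    rwa [p0, pN] at this
  have hball : ∀ i, ENNReal.ofReal (ε/2) ≤ μH[1] (K ∩ Metric.ball (p i) (ε/2)) := by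
    intro i
    by_cases hc : ε/2 ≤ dist (p i) x
    · exact H1_ball hK (pK i) hx hc
    · refine H1_ball hK (pK i) hy ?_
      have := dist_triangle_left x y (p i)
      linarith
  let s := Finset.range (N / 2 + 1)
  have hdisj : (s : Set ℕ).PairwiseDisjoint (fun k => Metric.ball (p (2*k)) (ε/2)) := by
    intro a ha b hb hab
    simp only [s, Finset.coe_range, mem_Iio] at ha hb
    apply Metric.ball_disjoint_ball
    rcases lt_or_gt_of_ne hab with h | h
    · have := hfar (2*a) (2*b) (by omega) (by omega); linarith
    · have := hfar (2*b) (2*a) (by omega) (by omega); rw [dist_comm]; linarith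
  have hsum : ∑ k ∈ s, (μH[1]).restrict K (Metric.ball (p (2*k)) (ε/2)) ≤ (μH[1] K) := by
    rw [← measure_biUnion_finset hdisj (fun _ _ => Metric.isOpen_ball.measurableSet)]
    exact (measure_mono (subset_univ _)).trans (by simp)
  have h3 : ∑ k ∈ s, ENNReal.ofReal (ε/2) ≤ μH[1] K := by
    refine le_trans (Finset.sum_le_sum fun k _ => ?_) hsum
    rw [Measure.restrict_apply Metric.isOpen_ball.measurableSet, inter_comm]
    exact hball _
  have h4 := ENNReal.toReal_mono hfin.ne h3
  rw [← ENNReal.ofReal_sum_of_nonneg (fun _ _ => by positivity), ENNReal.toReal_ofReal (by positivity)] at h4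
  simp only [Finset.sum_const, s, Finset.card_range, nsmul_eq_mul] at h4
  have h5 : (N : ℝ) ≤ 2 * ((N / 2 + 1 : ℕ) : ℝ) := by exact_mod_cast (by omega : N ≤ 2 * (N/2+1))
  nlinarith

/-- compactness -/
theorem limit_curve {X : Type*} [MetricSpace X] {K : Set X} (hK : IsCompact K)
    (f : ℕ → ℝ → X) (hf : ∀ n t, f n t ∈ K) (C : ℝ) (ε : ℕ → ℝ) (hε : Tendsto ε atTop (𝓝 0))
    (hC : ∀ n s t, dist (f n s) (f n t) ≤ (C + ε n) * |s - t| + ε n) :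
    ∃ g : ℝ → X, (∀ t, g t ∈ K) ∧
      (∀ t, Tendsto (fun n => f n t) (hyperfilter ℕ : Filter ℕ) (𝓝 (g t))) ∧
      ∀ s t, dist (g s) (g t) ≤ C * |s - t| := by
  have h1 : ∀ t, ∃ y ∈ K, Tendsto (fun n => f n t) (hyperfilter ℕ : Filter ℕ) (𝓝 y) := by
    intro t
    obtain ⟨y, hy, h⟩ := hK.ultrafilter_le_nhds ((hyperfilter ℕ).map (fun n => f n t)) (by
      rw [le_principal_iff, Ultrafilter.mem_coe, Ultrafilter.mem_map]
      exact Filter.univ_mem' (fun n => hf n t))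
    exact ⟨y, hy, h⟩
  choose g hgK hg using h1
  refine ⟨g, hgK, hg, fun s t => ?_⟩
  have hε' : Tendsto ε (hyperfilter ℕ : Filter ℕ) (𝓝 0) := hε.mono_left Nat.hyperfilter_le_atTop
  have h2 : Tendsto (fun n => (C + ε n) * |s - t| + ε n) (hyperfilter ℕ : Filter ℕ)
      (𝓝 ((C + 0) * |s - t| + 0)) := ((hε'.const_add C).mul_const _).add hε'
  have := le_of_tendsto_of_tendsto' ((hg s).dist (hg t)) h2 (fun n => hC n s t)
  simpa using this

theorem exists_lip_path {X : Type*} [MetricSpace X] [MeasurableSpace X] [BorelSpace X]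
    {K : Set X} (hc : IsCompact K) (hK : IsPreconnected K) (hfin : μH[1] K < ⊤)
    {x y : X} (hx : x ∈ K) (hy : y ∈ K) :
    ∃ f : ℝ → X, (∀ t, f t ∈ K) ∧ f 0 = x ∧ f 1 = y ∧
      ∀ s t, dist (f s) (f t) ≤ (4 * (μH[1] K).toReal) * |s - t| := by
  have hpos : ∀ n : ℕ, 0 < 1 / ((n : ℝ) + 1) := fun n => Nat.one_div_pos_of_nat
  choose N p p0 pN pK pd pl using fun n : ℕ => exists_short_chain hK hfin hx hy (hpos n)
  have hd : ∀ n i j, i ≤ j → j ≤ N n → dist (p n i) (p n j) ≤ (j - i : ℝ) * (1 / ((n : ℝ) + 1)) := by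
    intro n i j hij
    induction j, hij using Nat.le_induction with
    | base => intro; simp
    | succ k hk ih =>
      intro h
      have h1 := ih (by omega)
      have h2 := (pd n k (by omega)).le
      have h3 := dist_triangle (p n i) (p n k) (p n (k+1))
      push_cast
      linarith
  let q : ℕ → ℝ → ℕ := fun n t => min (⌊t * N n⌋₊) (N n)
  have hq : ∀ n s t, s ≤ t → dist (p n (q n s)) (p n (q n t)) ≤
      (4 * (μH[1] K).toReal + 1 / ((n : ℝ) + 1)) * |s - t| + 1 / ((n : ℝ) + 1) := by
    intro n s t hst
    have hN : (0:ℝ) ≤ N n := Nat.cast_nonneg _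
    have h1 : q n s ≤ q n t := min_le_min_right _ (Nat.floor_le_floor (by gcongr))
    have h2 := hd n _ _ h1 (min_le_right _ _)
    have h3 : (q n t : ℝ) - q n s ≤ N n * (t - s) + 1 := by
      have hts : 0 ≤ N n * (t - s) := mul_nonneg hN (by linarith)
      simp only [q]
      rcases le_total (⌊s * N n⌋₊) (N n) with h | h
      · rw [min_eq_left h]
        have h4 : ((min ⌊t * N n⌋₊ (N n) : ℕ) : ℝ) ≤ ⌊t * N n⌋₊ := by
          exact_mod_cast min_le_left _ _
        have h5 := Nat.lt_floor_add_one (s * N n)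
        rcases le_total 0 (t * N n) with h0 | h0
        · have h6 := Nat.floor_le h0
          nlinarith
        · have h7 : (⌊t * N n⌋₊ : ℝ) = 0 := by rw [Nat.floor_of_nonpos h0]; simp
          have : (0:ℝ) ≤ ⌊s * N n⌋₊ := Nat.cast_nonneg _
          linarith
      · rw [min_eq_right h]
        have h4 : ((min ⌊t * N n⌋₊ (N n) : ℕ) : ℝ) ≤ N n := by
          exact_mod_cast min_le_right _ _
        linarith
    have h4 := pl n
    rw [abs_of_nonpos (by linarith)]
    have h5 := hpos n
    set e := 1 / ((n : ℝ) + 1)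
    calc _ ≤ _ := h2
      _ ≤ (N n * (t - s) + 1) * e := by gcongr
      _ = (N n * e) * (t - s) + e := by ring
      _ ≤ (4 * (μH[1] K).toReal + e) * (t - s) + e := by
        have : 0 ≤ t - s := by linarith
        gcongr
      _ = _ := by ring
  obtain ⟨g, gK, gl, gd⟩ := limit_curve hc (fun n t => p n (q n t)) (fun n t => pK _ _)
    (4 * (μH[1] K).toReal) (fun n => 1 / ((n : ℝ) + 1)) tendsto_one_div_add_atTop_nhds_zero_nat
    (by
      intro n s t
      rcases le_total s t with h | h
      · exact hq n s t h
      · rw [dist_comm, abs_sub_comm]; exact hq n t s h)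
  refine ⟨g, gK, ?_, ?_, gd⟩
  · refine tendsto_nhds_unique (gl 0) ?_
    simp [q, p0]
  · refine tendsto_nhds_unique (gl 1) ?_
    simp [q, pN]

/-- Minimal Lipschitz curve from a point to a closed set. -/
theorem exists_min_path {X : Type*} [MetricSpace X] [MeasurableSpace X] [BorelSpace X]
    {K : Set X} (hc : IsCompact K) (hK : IsPreconnected K) (hfin : μH[1] K < ⊤)
    {S : Set X} (hS : IsClosed S) (hSK : S ⊆ K) (hSn : S.Nonempty)
    {x : X} (hx : x ∈ K) (hxS : x ∉ S) :
    ∃ C : ℝ, 0 ≤ C ∧ ∃ f : ℝ → X, (∀ t, f t ∈ K) ∧ f 0 = x ∧ f 1 ∈ S ∧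
      (∀ s t, dist (f s) (f t) ≤ C * |s - t|) ∧ InjOn f (Icc 0 1) ∧
      ∀ t ∈ Ico (0:ℝ) 1, f t ∉ S := by
  let A : Set ℝ := {C | 0 ≤ C ∧ ∃ f : ℝ → X, (∀ t, f t ∈ K) ∧ f 0 = x ∧ f 1 ∈ S ∧
      (∀ s t, dist (f s) (f t) ≤ C * |s - t|)}
  have hAne : A.Nonempty := by
    obtain ⟨y, hy⟩ := hSn
    obtain ⟨f, h1, h2, h3, h4⟩ := exists_lip_path hc hK hfin hx (hSK hy)
    exact ⟨_, by positivity, f, h1, h2, h3 ▸ hy, h4⟩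
  have hAb : BddBelow A := ⟨0, fun C hC => hC.1⟩
  have hmin : sInf A ∈ A := by
    have hpos : ∀ n : ℕ, 0 < 1 / ((n : ℝ) + 1) := fun n => Nat.one_div_pos_of_nat
    have : ∀ n : ℕ, ∃ C ∈ A, C < sInf A + 1 / ((n : ℝ) + 1) := fun n =>
      exists_lt_of_csInf_lt hAne (by linarith [hpos n])
    choose C hCA hC using this
    choose hC0 f hfK hf0 hf1 hfl using hCA
    obtain ⟨g, gK, gl, gd⟩ := limit_curve hc f hfK (sInf A) (fun n => 1 / ((n : ℝ) + 1))
      tendsto_one_div_add_atTop_nhds_zero_nat (by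
        intro n s t
        have h1 := hfl n s t
        have h2 : C n * |s - t| ≤ (sInf A + 1 / ((n : ℝ) + 1)) * |s - t| := by
          gcongr; exact (hC n).le
        have h3 := hpos n
        linarith)
    refine ⟨le_csInf hAne fun C hC => hC.1, g, gK, ?_, ?_, gd⟩
    · refine tendsto_nhds_unique (gl 0) ?_
      simp [hf0]
    · exact hS.mem_of_tendsto (gl 1) (Eventually.of_forall hf1)
  have hleast : ∀ C ∈ A, sInf A ≤ C := fun C hC => csInf_le hAb hC
  generalize sInf A = C at hmin hleast
  obtain ⟨hC0, f, fK, f0, f1, fl⟩ := hmin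
  have hCpos : 0 < C := by
    rcases hC0.lt_or_eq with h | h
    · exact h
    · exfalso; apply hxS
      have := fl 0 1
      rw [← h, zero_mul] at this
      rw [← f0, dist_le_zero.1 this]; exact f1
  refine ⟨C, hC0, f, fK, f0, f1, fl, ?_, ?_⟩
  · -- injectivity
    have key : ∀ s ∈ Icc (0:ℝ) 1, ∀ t ∈ Icc (0:ℝ) 1, s < t → f s ≠ f t := by
      intro s hs t ht hst heq
      let g : ℝ → X := fun u => if u ≤ s then f u else f (u + (t - s))
      have gl' : ∀ u v, u ≤ v → dist (g u) (g v) ≤ C * (v - u) := by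
        intro u v huv
        simp only [g]
        split_ifs with h1 h2 h3
        · have := fl u v; rwa [abs_of_nonpos (by linarith), neg_sub] at this
        · have h4 := fl u s
          have h5 := fl t (v + (t - s))
          rw [abs_of_nonpos (by linarith)] at h4 h5
          have h6 := dist_triangle (f u) (f s) (f (v + (t - s)))
          rw [← heq] at h5
          linarith
        · linarith
        · have := fl (u + (t - s)) (v + (t - s))
          rw [abs_of_nonpos (by linarith)] at this
          linarith
      have gl : ∀ u v, dist (g u) (g v) ≤ C * |u - v| := by
        intro u v
        rcases le_total u v with h | h
        · rw [abs_of_nonpos (by linarith), neg_sub]; exact gl' u v h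
        · rw [abs_of_nonneg (by linarith), dist_comm]; exact gl' v u h
      have hl : 0 ≤ 1 - (t - s) := by linarith [hs.1, ht.2]
      have : C * (1 - (t - s)) ∈ A := by
        refine ⟨by positivity, fun u => g ((1 - (t - s)) * u), ?_, ?_, ?_, ?_⟩
        · intro u; simp only [g]; split_ifs <;> exact fK _
        · simp [g, hs.1, f0]
        · simp only [g, mul_one]
          split_ifs with h
          · have h1 : t = 1 := by linarith [ht.2]
            rw [h1, show 1 - (1 - s) = s by ring, heq, h1]; exact f1
          · rwa [show 1 - (t - s) + (t - s) = 1 by ring]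
        · intro u v
          refine (gl _ _).trans ?_
          rw [← mul_sub, abs_mul, abs_of_nonneg hl, mul_assoc]
      have := hleast _ this
      nlinarith
    intro s hs t ht heq
    rcases lt_trichotomy s t with h | h | h
    · exact absurd heq (key s hs t ht h)
    · exact h
    · exact absurd heq.symm (key t ht s hs h)
  · intro t ht hft
    have : C * t ∈ A := by
      refine ⟨mul_nonneg hC0 ht.1, fun u => f (t * u), fun u => fK _, by simpa using f0, by simpa using hft, ?_⟩
      intro u v
      refine (fl _ _).trans ?_
      rw [← mul_sub, abs_mul, abs_of_nonneg ht.1, mul_assoc]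
    have := hleast _ this
    nlinarith [ht.2]

/-- 1-Lipschitz arc from a point to a closed set. -/
theorem exists_arc {X : Type*} [MetricSpace X] [MeasurableSpace X] [BorelSpace X]
    {K : Set X} (hc : IsCompact K) (hK : IsPreconnected K) (hfin : μH[1] K < ⊤)
    {S : Set X} (hS : IsClosed S) (hSK : S ⊆ K) (hSn : S.Nonempty)
    {x : X} (hx : x ∈ K) :
    ∃ h : ℝ, 0 ≤ h ∧ ∃ b : ℝ → X, (∀ t, b t ∈ K) ∧ b 0 = x ∧ b h ∈ S ∧ LipschitzWith 1 b ∧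
      ENNReal.ofReal h ≤ μH[1] (b '' Icc 0 h \ S) := by
  by_cases hxS : x ∈ S
  · exact ⟨0, le_rfl, fun _ => x, fun _ => hx, rfl, hxS, LipschitzWith.const' x, by simp⟩
  obtain ⟨C, hC0, f, fK, f0, f1, fl, finj, fS⟩ := exists_min_path hc hK hfin hS hSK hSn hx hxS
  have hfl : LipschitzWith C.toNNReal f := LipschitzWith.of_dist_le_mul fun s t => by
    rw [Real.coe_toNNReal _ hC0]; exact fl s t
  have hfc : Continuous f := hfl.continuous
  have hfinA : ∀ A : Set ℝ, μH[1] (f '' A) ≠ ⊤ := fun A =>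
    ((measure_mono (image_subset_iff.2 fun t _ => fK t)).trans_lt hfin).ne
  let φ : ℝ → ℝ := fun t => (μH[1] (f '' Icc 0 t)).toReal
  have hlow : ∀ s t, 0 ≤ s → s ≤ t → t ≤ 1 → φ s + dist (f s) (f t) ≤ φ t := by
    intro s t hs hst ht
    have h1 : ENNReal.ofReal (dist (f s) (f t)) ≤ μH[1] (f '' Ioc s t) := by
      calc _ ≤ μH[1] (f '' Icc s t) :=
            H1_dist (isPreconnected_Icc.image _ hfc.continuousOn)
              (mem_image_of_mem _ ⟨le_rfl, hst⟩) (mem_image_of_mem _ ⟨hst, le_rfl⟩)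
        _ = μH[1] (f '' Ioc s t ∪ {f s}) := by
            rw [← Ioc_union_left hst, image_union, image_singleton]
        _ ≤ μH[1] (f '' Ioc s t) + μH[1] {f s} := measure_union_le _ _
        _ = _ := by
          have : NullSingletonClass (μH[1] : Measure X) := Measure.nullSingletonClass_hausdorff X one_pos
          simp
    have hdis : Disjoint (f '' Ioc s t) (f '' Icc 0 s) := by
      rw [disjoint_left]
      rintro _ ⟨u, hu, rfl⟩ ⟨v, hv, hvu⟩
      have := finj ⟨hv.1, by linarith [hv.2]⟩ ⟨by linarith [hu.1], by linarith [hu.2]⟩ hvu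
      linarith [hu.1, hv.2]
    have h2 : μH[1] (f '' Ioc s t) + μH[1] (f '' Icc 0 s) ≤ μH[1] (f '' Icc 0 t) := by
      rw [← measure_union hdis (isCompact_Icc.image hfc).measurableSet, ← image_union]
      refine measure_mono (image_mono ?_)
      rintro u (hu | hu)
      · exact ⟨hs.trans hu.1.le, hu.2⟩
      · exact ⟨hu.1, hu.2.trans hst⟩
    have h3 := (add_le_add_left h1 (μH[1] (f '' Icc 0 s))).trans h2
    have h4 := ENNReal.toReal_mono (hfinA _) h3
    rw [ENNReal.toReal_add ENNReal.ofReal_ne_top (hfinA _), ENNReal.toReal_ofReal dist_nonneg] at h4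
    simp only [φ]; linarith
  have hup : ∀ s t, 0 ≤ s → s ≤ t → φ t ≤ φ s + C * (t - s) := by
    intro s t hs hst
    have h1 : μH[1] (f '' Icc s t) ≤ ENNReal.ofReal (C * (t - s)) := by
      have := hfl.hausdorffMeasure_image_le (d := 1) zero_le_one (Icc s t)
      rw [hausdorffMeasure_real] at this
      rw [ENNReal.ofReal_mul hC0]
      simpa [ENNReal.ofReal] using this
    have h2 : μH[1] (f '' Icc 0 t) ≤ μH[1] (f '' Icc 0 s) + μH[1] (f '' Icc s t) := by
      rw [← Icc_union_Icc_eq_Icc hs hst, image_union]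
      exact measure_union_le _ _
    have h3 := ENNReal.toReal_mono (ENNReal.add_ne_top.2 ⟨hfinA _, ENNReal.ofReal_ne_top⟩)
      (h2.trans (add_le_add_right h1 _))
    rw [ENNReal.toReal_add (hfinA _) ENNReal.ofReal_ne_top,
      ENNReal.toReal_ofReal (mul_nonneg hC0 (by linarith))] at h3
    exact h3
  have hφ0 : φ 0 = 0 := by
    have : NullSingletonClass (μH[1] : Measure X) := Measure.nullSingletonClass_hausdorff X one_pos
    simp [φ]
  have hdist : ∀ s ∈ Icc (0:ℝ) 1, ∀ t ∈ Icc (0:ℝ) 1, dist (f s) (f t) ≤ |φ s - φ t| := by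
    intro s hs t ht
    rcases le_total s t with h | h
    · have := hlow s t hs.1 h ht.2
      rw [abs_sub_comm]; exact le_trans (by linarith) (le_abs_self _)
    · have := hlow t s ht.1 h hs.2
      rw [dist_comm]; exact le_trans (by linarith) (le_abs_self _)
  have hφc : ContinuousOn φ (Icc 0 1) := by
    have : LipschitzOnWith C.toNNReal φ (Icc 0 1) := by
      refine LipschitzOnWith.of_le_add_mul _ ?_
      intro s hs t ht
      rw [Real.coe_toNNReal _ hC0, Real.dist_eq]
      rcases le_total s t with h | h
      · have := hlow s t hs.1 h ht.2
        have h2 : 0 ≤ C * |s - t| := by positivity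
        linarith [dist_nonneg (x := f s) (y := f t)]
      · rw [abs_of_nonneg (by linarith)]
        exact hup t s ht.1 h
    exact this.continuousOn
  let h := φ 1
  have hh : 0 ≤ h := ENNReal.toReal_nonneg
  have hsurj : ∀ u : ℝ, ∃ t ∈ Icc (0:ℝ) 1, φ t = (projIcc 0 h hh u : ℝ) := by
    intro u
    have := intermediate_value_Icc zero_le_one hφc
    rw [hφ0] at this
    exact this (projIcc 0 h hh u).2
  choose τ hτ hτφ using hsurj
  have hinv : ∀ t ∈ Icc (0:ℝ) 1, f (τ (φ t)) = f t ∧ φ t ∈ Icc 0 h := by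
    intro t ht
    have hmem : φ t ∈ Icc 0 h := by
      refine ⟨ENNReal.toReal_nonneg, ?_⟩
      have := hlow t 1 ht.1 ht.2 le_rfl
      exact le_trans (le_add_of_nonneg_right dist_nonneg) this
    refine ⟨?_, hmem⟩
    have h1 := hdist _ (hτ (φ t)) t ht
    rw [hτφ, projIcc_of_mem hh hmem] at h1
    simpa using h1
  refine ⟨h, hh, fun u => f (τ u), fun u => fK _, ?_, ?_, ?_, ?_⟩
  · have := (hinv 0 (by simp)).1
    rwa [hφ0, f0] at this
  · have := (hinv 1 (by simp)).1
    show f (τ (φ 1)) ∈ S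
    rw [this]; exact f1
  · refine LipschitzWith.of_dist_le_mul fun u v => ?_
    refine (hdist _ (hτ u) _ (hτ v)).trans ?_
    rw [hτφ, hτφ]
    have := (LipschitzWith.projIcc hh).dist_le_mul u v
    rwa [Subtype.dist_eq, Real.dist_eq] at this
  · have h1 : f '' Icc 0 1 ⊆ ((fun u => f (τ u)) '' Icc 0 h \ S) ∪ {f 1} := by
      rintro _ ⟨t, ht, rfl⟩
      rcases ht.2.lt_or_eq with hlt | heq
      · left
        exact ⟨⟨φ t, (hinv t ht).2, (hinv t ht).1⟩, fS t ⟨ht.1, hlt⟩⟩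
      · right; rw [heq]; rfl
    have h2 := (measure_mono (μ := μH[1]) h1).trans (measure_union_le _ _)
    have : NullSingletonClass (μH[1] : Measure X) := Measure.nullSingletonClass_hausdorff X one_pos
    rw [measure_singleton, add_zero] at h2
    simp only [h, φ]
    rwa [ENNReal.ofReal_toReal (hfinA _)]

theorem glue_lip {X : Type*} [MetricSpace X] {f g : ℝ → X} (hf : LipschitzWith 1 f)
    (hg : LipschitzWith 1 g) {c d : ℝ} (h : f c = g d) :
    LipschitzWith 1 (fun u => if u ≤ c then f u else g (u - c + d)) := by
  have key : ∀ u v, u ≤ v → dist ((fun u => if u ≤ c then f u else g (u - c + d)) u)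
      ((fun u => if u ≤ c then f u else g (u - c + d)) v) ≤ v - u := by
    intro u v huv
    have F : ∀ a b, dist (f a) (f b) ≤ |a - b| := fun a b => by simpa [Real.dist_eq] using hf.dist_le_mul a b
    have G : ∀ a b, dist (g a) (g b) ≤ |a - b| := fun a b => by simpa [Real.dist_eq] using hg.dist_le_mul a b
    dsimp only
    split_ifs with h1 h2 h3
    · have := F u v; rwa [abs_of_nonpos (by linarith), neg_sub] at this
    · have h4 := F u c
      have h5 := G d (v - c + d)
      rw [abs_of_nonpos (by linarith)] at h4 h5
      have := dist_triangle (f u) (f c) (g (v - c + d))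
      rw [← h] at h5
      linarith
    · linarith
    · have := G (u - c + d) (v - c + d)
      rw [abs_of_nonpos (by linarith)] at this
      linarith
  refine LipschitzWith.of_dist_le_mul fun u v => ?_
  rw [NNReal.coe_one, one_mul, Real.dist_eq]
  rcases le_total u v with h | h
  · exact (key u v h).trans (by rw [abs_sub_comm]; exact le_abs_self _)
  · rw [dist_comm]; exact (key v u h).trans (le_abs_self _)

/-- Insert an excursion into a curve. -/
theorem exists_excursion {X : Type*} [MetricSpace X] {K : Set X} {f b : ℝ → X}
    (hf : LipschitzWith 1 f) (hb : LipschitzWith 1 b) (fK : ∀ t, f t ∈ K) (bK : ∀ t, b t ∈ K)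
    {a h c : ℝ} (hh : 0 ≤ h) (hc : c ∈ Icc 0 a) (hbc : f c = b h) :
    ∃ g : ℝ → X, LipschitzWith 1 g ∧ (∀ t, g t ∈ K) ∧
      f '' Icc 0 a ∪ b '' Icc 0 h ⊆ g '' Icc 0 (a + 2 * h) := by
  let g1 : ℝ → X := fun u => if u ≤ h then b u else f (u - h + c)
  have hg1 : LipschitzWith 1 g1 := glue_lip hb hf hbc.symm
  let b' : ℝ → X := fun u => b (-u)
  have hb' : LipschitzWith 1 b' := by
    refine LipschitzWith.of_dist_le_mul fun u v => ?_
    have := hb.dist_le_mul (-u) (-v)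
    rwa [dist_neg_neg] at this
  let g2 : ℝ → X := fun u => if u ≤ 0 then b' u else g1 (u - 0 + 0)
  have hg2 : LipschitzWith 1 g2 := glue_lip hb' hg1 (by simp [b', g1, hh])
  let g3 : ℝ → X := fun u => if u ≤ c then f u else g2 (u - c + (-h))
  have hg3 : LipschitzWith 1 g3 := glue_lip hf hg2 (by simp [g2, b', hh, hbc])
  refine ⟨g3, hg3, ?_, ?_⟩
  · intro t
    simp only [g3, g2, g1, b']
    split_ifs <;> first | exact fK _ | exact bK _
  · rintro _ (⟨t, ht, rfl⟩ | ⟨t, ht, rfl⟩)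
    · rcases le_or_gt t c with htc | htc
      · exact ⟨t, ⟨ht.1, by linarith [ht.2]⟩, by simp [g3, htc]⟩
      · refine ⟨t + 2 * h, ⟨by linarith [ht.1], by linarith [ht.2]⟩, ?_⟩
        simp only [g3, g2, g1]
        rw [if_neg (by linarith), if_neg (by linarith), if_neg (by linarith)]
        congr 1; ring
    · rcases ht.2.lt_or_eq with hlt | heq
      · refine ⟨c + h - t, ⟨by linarith [hc.1], by linarith [hc.2, ht.1]⟩, ?_⟩
        simp only [g3, g2, b']
        rw [if_neg (by linarith), if_pos (by linarith [ht.1])]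
        congr 1; ring
      · refine ⟨c, ⟨hc.1, by linarith [hc.2]⟩, ?_⟩
        simp only [g3]
        rw [if_pos le_rfl, heq, hbc]

theorem exists_dense_curve {X : Type*} [MetricSpace X] [MeasurableSpace X] [BorelSpace X]
    {K : Set X} (hc : IsCompact K) (hK : IsConnected K) (hfin : μH[1] K < ⊤)
    {ε : ℝ} (hε : 0 < ε) :
    ∃ a : ℝ, 0 ≤ a ∧ a + Metric.diam K ≤ 2 * (μH[1] K).toReal ∧ ∃ g : ℝ → X, LipschitzWith 1 g ∧
      (∀ t, g t ∈ K) ∧ ∀ x ∈ K, ∃ t ∈ Icc 0 a, dist x (g t) < ε := by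
  by_contra hcon
  push Not at hcon
  have hfinA : ∀ A ⊆ K, μH[1] A ≠ ⊤ := fun A hA => ((measure_mono hA).trans_lt hfin).ne
  have hmono : ∀ A ⊆ K, (μH[1] A).toReal ≤ (μH[1] K).toReal := fun A hA =>
    ENNReal.toReal_mono hfin.ne (measure_mono hA)
  have step : ∀ n : ℕ, ∃ a : ℝ, 0 ≤ a ∧ ∃ g : ℝ → X, LipschitzWith 1 g ∧ (∀ t, g t ∈ K) ∧
      a + Metric.diam K ≤ 2 * (μH[1] (g '' Icc 0 a)).toReal ∧
      n * ε ≤ (μH[1] (g '' Icc 0 a)).toReal := by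
    intro n
    induction n with
    | zero =>
      obtain ⟨x, hx, y, hy, hxy⟩ : ∃ x ∈ K, ∃ y ∈ K, Metric.diam K ≤ dist x y := by
        obtain ⟨⟨x, y⟩, hp, hmax⟩ := (hc.prod hc).exists_isMaxOn (hK.nonempty.prod hK.nonempty)
          (f := fun p : X × X => dist p.1 p.2) continuous_dist.continuousOn
        refine ⟨x, hp.1, y, hp.2, Metric.diam_le_of_forall_dist_le dist_nonneg ?_⟩
        intro u hu v hv
        exact hmax (show (u, v) ∈ K ×ˢ K from ⟨hu, hv⟩)
      obtain ⟨h, hh, b, bK, b0, b1, bl, bm⟩ := exists_arc hc hK.isPreconnected hfin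
        (isClosed_singleton (x := y)) (by simpa using hy) ⟨y, rfl⟩ hx
      refine ⟨h, hh, b, bl, bK, ?_, by simp⟩
      have hd : dist x y ≤ h := by
        have := bl.dist_le_mul 0 h
        rw [b0, mem_singleton_iff.1 b1] at this
        simpa [Real.dist_eq, abs_of_nonneg hh] using this
      have h1 := ENNReal.toReal_mono (hfinA (b '' Icc 0 h) (by rintro _ ⟨t, -, rfl⟩; exact bK t))
        (bm.trans (measure_mono sdiff_subset))
      rw [ENNReal.toReal_ofReal hh] at h1
      linarith
    | succ n ih =>
      obtain ⟨a, ha, g, gl, gK, g1, g2⟩ := ih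
      have hgK : g '' Icc 0 a ⊆ K := by rintro _ ⟨t, -, rfl⟩; exact gK t
      have hcpt : IsCompact (g '' Icc 0 a) := isCompact_Icc.image gl.continuous
      obtain ⟨x, hx, hxd⟩ := hcon a ha (by linarith [hmono _ hgK]) g gl gK
      obtain ⟨h, hh, b, bK, b0, b1, bl, bm⟩ := exists_arc hc hK.isPreconnected hfin
        hcpt.isClosed hgK ⟨g 0, mem_image_of_mem _ ⟨le_rfl, ha⟩⟩ hx
      obtain ⟨c, hc', hcb⟩ := b1
      obtain ⟨k, kl, kK, kS⟩ := exists_excursion gl bl gK bK hh hc' hcb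
      have hd : ε ≤ h := by
        refine (hxd c hc').trans ?_
        have := bl.dist_le_mul 0 h
        rw [b0, ← hcb] at this
        simpa [Real.dist_eq, abs_of_nonneg hh] using this
      have hm : μH[1] (g '' Icc 0 a) + ENNReal.ofReal h ≤ μH[1] (k '' Icc 0 (a + 2 * h)) := by
        calc _ ≤ μH[1] (g '' Icc 0 a) + μH[1] (b '' Icc 0 h \ g '' Icc 0 a) := by gcongr
          _ = μH[1] (g '' Icc 0 a ∪ b '' Icc 0 h) := by
            rw [add_comm, ← measure_union disjoint_sdiff_left hcpt.measurableSet,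
              sdiff_union_self, union_comm]
          _ ≤ _ := measure_mono kS
      have h1 := ENNReal.toReal_mono (hfinA _ (by rintro _ ⟨t, -, rfl⟩; exact kK t)) hm
      rw [ENNReal.toReal_add (hfinA _ hgK) ENNReal.ofReal_ne_top, ENNReal.toReal_ofReal hh] at h1
      refine ⟨a + 2 * h, by positivity, k, kl, kK, by linarith, ?_⟩
      push_cast
      linarith
  obtain ⟨n, hn⟩ := exists_nat_gt ((μH[1] K).toReal / ε)
  obtain ⟨a, ha, g, gl, gK, g1, g2⟩ := step n
  rw [div_lt_iff₀ hε] at hn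
  have := hmono (g '' Icc 0 a) (by rintro _ ⟨t, -, rfl⟩; exact gK t)
  linarith

/-- A continuum `K` of finite Hausdorff 1-measure is the image of a curve
`γ : [0,1] → K` with length at most `2·H¹(K) − diam K`. -/
theorem continuum_finite_H1_exists_curve {X : Type*} [MetricSpace X]
    [MeasurableSpace X] [BorelSpace X] (K : Set X)
    (hcomp : IsCompact K) (hconn : IsConnected K)
    (hfin : μH[1] K < ⊤) :
    ∃ γ : ℝ → X, ContinuousOn γ (Set.Icc 0 1) ∧ γ '' Set.Icc 0 1 = K ∧
      eVariationOn γ (Set.Icc 0 1) ≤ 2 * μH[1] K - EMetric.diam K := by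
  have hpos : ∀ n : ℕ, 0 < 1 / ((n : ℝ) + 1) := fun n => Nat.one_div_pos_of_nat
  choose a ha hal g gl gK gd using fun n : ℕ => exists_dense_curve hcomp hconn hfin (hpos n)
  obtain ⟨L, hL⟩ : ∃ L, L = 2 * (μH[1] K).toReal - Metric.diam K := ⟨_, rfl⟩
  have haL : ∀ n, a n ≤ L := fun n => by linarith [hal n]
  have hL0 : 0 ≤ L := (ha 0).trans (haL 0)
  have gl' : ∀ n s t, dist (g n s) (g n t) ≤ |s - t| := fun n s t => by
    simpa [Real.dist_eq] using (gl n).dist_le_mul s t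
  have fl : ∀ n s t, dist (g n (L * s)) (g n (L * t)) ≤ L * |s - t| := fun n s t => by
    refine (gl' n _ _).trans ?_
    rw [← mul_sub, abs_mul, abs_of_nonneg hL0]
  have hten := tendsto_one_div_add_atTop_nhds_zero_nat (𝕜 := ℝ)
  obtain ⟨γ, γK, γl, γd⟩ := limit_curve hcomp (fun n t => g n (L * t)) (fun n t => gK n _) L
    (fun n => 1 / ((n : ℝ) + 1)) hten (by
      intro n s t
      have h1 := fl n s t
      have h2 := hpos n
      have h3 : 0 ≤ 1 / ((n : ℝ) + 1) * |s - t| := by positivity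
      linarith)
  have γlip : LipschitzWith L.toNNReal γ := LipschitzWith.of_dist_le_mul fun s t => by
    rw [Real.coe_toNNReal _ hL0]; exact γd s t
  refine ⟨γ, γlip.continuous.continuousOn, ?_, ?_⟩
  · apply Subset.antisymm
    · rintro _ ⟨t, -, rfl⟩; exact γK t
    intro x hx
    have : ∀ n, ∃ t ∈ Icc (0:ℝ) 1, dist x (g n (L * t)) < 1 / ((n : ℝ) + 1) := by
      intro n
      obtain ⟨u, hu, hd⟩ := gd n x hx
      rcases hL0.lt_or_eq with hLp | hLz
      · refine ⟨u / L, ⟨div_nonneg hu.1 hL0, ?_⟩, ?_⟩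
        · rw [div_le_one hLp]; exact hu.2.trans (haL n)
        · rwa [mul_div_cancel₀ _ hLp.ne']
      · refine ⟨0, by simp, ?_⟩
        have : u = 0 := le_antisymm (by rw [hLz]; exact hu.2.trans (haL n)) hu.1
        rwa [mul_zero, ← this]
    choose t ht htd using this
    obtain ⟨t0, ht0, htl⟩ := (isCompact_Icc (a := (0:ℝ)) (b := 1)).ultrafilter_le_nhds
      ((hyperfilter ℕ).map t) (by
        rw [le_principal_iff, Ultrafilter.mem_coe, Ultrafilter.mem_map]
        exact Filter.univ_mem' ht)
    have htl' : Tendsto t (hyperfilter ℕ : Filter ℕ) (𝓝 t0) := htl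
    refine ⟨t0, ht0, ?_⟩
    have hb : ∀ n, dist x (g n (L * t0)) ≤ 1 / ((n : ℝ) + 1) + L * |t n - t0| := fun n => by
      have h1 := dist_triangle x (g n (L * t n)) (g n (L * t0))
      linarith [htd n, fl n (t n) t0]
    have hlim : Tendsto (fun n : ℕ => 1 / ((n : ℝ) + 1) + L * |t n - t0|)
        (hyperfilter ℕ : Filter ℕ) (𝓝 (0 + L * |t0 - t0|)) :=
      (hten.mono_left Nat.hyperfilter_le_atTop).add ((htl'.sub_const t0).abs.const_mul L)
    have := le_of_tendsto_of_tendsto' (tendsto_const_nhds.dist (γl t0)) hlim hb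
    rw [sub_self, abs_zero, mul_zero, add_zero] at this
    exact (dist_le_zero.1 this).symm
  · have h1 : eVariationOn γ (Icc 0 1) ≤ ENNReal.ofReal L := by
      have := (γlip.lipschitzOnWith (s := univ)).comp_eVariationOn_le (g := (id : ℝ → ℝ))
        (s := Icc 0 1) (fun _ _ => mem_univ _)
      refine this.trans ?_
      have h2 : eVariationOn (id : ℝ → ℝ) (Icc 0 1) ≤ ENNReal.ofReal (1 - 0) := by
        have := (monotone_id (α := ℝ)).monotoneOn (Icc 0 1) |>.eVariationOn_le
          (a := 0) (b := 1) (by simp) (by simp)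
        simpa using this
      calc _ ≤ (L.toNNReal : ENNReal) * ENNReal.ofReal (1 - 0) := by gcongr
        _ = _ := by simp [ENNReal.ofReal]
    refine h1.trans ?_
    change _ ≤ _ - Metric.ediam K
    have hdiam : Metric.ediam K ≠ ⊤ := hcomp.isBounded.ediam_ne_top
    rw [hL, ENNReal.ofReal_sub _ Metric.diam_nonneg, ENNReal.ofReal_mul (by norm_num),
      ENNReal.ofReal_toReal hfin.ne, Metric.diam, ENNReal.ofReal_toReal hdiam]
    simp
end

section
/- Let {K_i}_{i ∈ I} be a collection of pairwise disjoint Peano continua in ℝ². Then, with the exception of at most countably many indices i ∈ I, each K_i is a Jordan arc or a Jordan curve. -/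
/-- A Jordan arc in the plane: a homeomorphic (continuous injective) image of a
closed interval `[a,b]` (possibly degenerate, `a = b`). -/
def IsJordanArc (K : Set (ℝ × ℝ)) : Prop :=
  ∃ (a b : ℝ) (f : ℝ → ℝ × ℝ), a ≤ b ∧ ContinuousOn f (Set.Icc a b) ∧
    Set.InjOn f (Set.Icc a b) ∧ f '' Set.Icc a b = K

/-- A Jordan curve in the plane: a homeomorphic image of the circle. -/
def IsJordanCurve (K : Set (ℝ × ℝ)) : Prop :=
  ∃ f : AddCircle (1 : ℝ) → ℝ × ℝ,
    Continuous f ∧ Function.Injective f ∧ Set.range f = K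

open Set Filter Topology

open Classical in
/-- total change of a continuous logarithm along a nonvanishing path -/
noncomputable def logDelta (f : ℝ → ℂ) : ℂ :=
  if h : ∃ l : ℝ → ℂ, Continuous l ∧ ∀ x, Complex.exp (l x) = f x then
    h.choose 1 - h.choose 0 else 0

lemma lift_unique (l₁ l₂ : ℝ → ℂ) (h₁ : Continuous l₁) (h₂ : Continuous l₂)
    (c : ℂ) (h : ∀ x, Complex.exp (l₁ x) = c * Complex.exp (l₂ x)) :
    l₁ 1 - l₁ 0 = l₂ 1 - l₂ 0 := by
  have hu := Complex.isCoveringMapOn_exp.existsUnique_continuousMap_lifts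
    (⟨fun x => Complex.exp (l₁ x), by fun_prop⟩ : C(ℝ, ℂ)) (a₀ := 0) (e₀ := l₁ 0) rfl
    (fun a => by simp)
  have e := hu.unique (y₁ := ⟨l₁, h₁⟩) (y₂ := ⟨fun x => l₂ x + (l₁ 0 - l₂ 0), by fun_prop⟩)
    ⟨rfl, rfl⟩ ⟨by simp, by
      funext x
      have h0 := h 0
      have hx := h x
      simp only [ContinuousMap.coe_mk, Function.comp]
      rw [Complex.exp_add, Complex.exp_sub, h0, hx]
      field_simp [Complex.exp_ne_zero]⟩
  have e1 := congrArg (fun f : C(ℝ, ℂ) => f 1) e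
  simp at e1
  rw [e1]; ring

lemma exists_lift {A : Type*} [TopologicalSpace A] [SimplyConnectedSpace A]
    [LocallyPathConnectedSpace A] [Inhabited A] (f : A → ℂ) (hf : Continuous f)
    (h0 : ∀ x, f x ≠ 0) : ∃ l : A → ℂ, Continuous l ∧ ∀ x, Complex.exp (l x) = f x := by
  obtain ⟨F, ⟨-, hF⟩, -⟩ := Complex.isCoveringMapOn_exp.existsUnique_continuousMap_lifts
    (⟨f, hf⟩ : C(A, ℂ)) (a₀ := default) (e₀ := Complex.log (f default))
    (Complex.exp_log (h0 _)) (fun a => h0 a)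
  exact ⟨F, F.continuous, fun x => congrFun hF x⟩

lemma logDelta_eq (f : ℝ → ℂ) (l : ℝ → ℂ) (hl : Continuous l) (c : ℂ) (hc : c ≠ 0)
    (h : ∀ x, Complex.exp (l x) = c * f x) : logDelta f = l 1 - l 0 := by
  have hex : ∃ l : ℝ → ℂ, Continuous l ∧ ∀ x, Complex.exp (l x) = f x := by
    refine ⟨fun x => l x - Complex.log c, by fun_prop, fun x => ?_⟩
    rw [Complex.exp_sub, h, Complex.exp_log hc]; field_simp
  rw [logDelta, dif_pos hex]
  symm
  apply lift_unique _ _ hl hex.choose_spec.1 c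
  intro x; rw [h, hex.choose_spec.2]

lemma exp_logDelta (f : ℝ → ℂ) (hf : Continuous f) (h0 : ∀ x, f x ≠ 0) :
    Complex.exp (logDelta f) = f 1 / f 0 := by
  obtain ⟨l, hl, h⟩ := exists_lift f hf h0
  rw [logDelta_eq f l hl 1 one_ne_zero (by simpa using h), Complex.exp_sub, h, h]

lemma log_square (f g : ℝ → ℂ) (hf : Continuous f) (hg : Continuous g) (h : ∀ x y, f x ≠ g y) :
    logDelta (fun x => f x - g 0) + logDelta (fun y => g y - f 1) =
    logDelta (fun y => g y - f 0) + logDelta (fun x => f x - g 1) := by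
  obtain ⟨l, hl, h⟩ := exists_lift (fun z : ℝ × ℝ => f z.1 - g z.2) (by fun_prop)
    (fun z => sub_ne_zero.2 (h _ _))
  rw [logDelta_eq (fun x => f x - g 0) (fun x => l (x, 0)) (by fun_prop) 1 one_ne_zero (by simp [h]),
    logDelta_eq (fun x => f x - g 1) (fun x => l (x, 1)) (by fun_prop) 1 one_ne_zero (by simp [h]),
    logDelta_eq (fun y => g y - f 0) (fun x => l (0, x)) (by fun_prop) (-1) (by simp) (by simp [h]),
    logDelta_eq (fun y => g y - f 1) (fun x => l (1, x)) (by fun_prop) (-1) (by simp) (by simp [h])]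
  ring

lemma exp_int (a b : ℂ) (h : Complex.exp a = Complex.exp b) :
    ∃ n : ℤ, a = b + Real.pi * Complex.I * (2 * n) := by
  obtain ⟨n, hn⟩ := Complex.exp_eq_exp_iff_exists_int.1 h
  exact ⟨n, by rw [hn]; ring⟩

/-- `K_{3,3}` is not planar -/
theorem k33 (p b : Fin 3 → ℂ) (γ : Fin 3 → Fin 3 → ℝ → ℂ) (hc : ∀ t j, Continuous (γ t j))
    (h0 : ∀ t j, γ t j 0 = p t) (h1 : ∀ t j, γ t j 1 = b j)
    (hd : ∀ t s j k, t ≠ s → j ≠ k → ∀ x y, γ t j x ≠ γ s k y) : False := by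
  have ex : ∀ j : Fin 3, ∃ k, j ≠ k := by decide
  have hp : ∀ s t j x, s ≠ t → γ t j x - p s ≠ 0 := by
    intro s t j x hst
    obtain ⟨k, hk⟩ := ex j
    rw [← h0 s k, sub_ne_zero]
    exact hd _ _ _ _ hst.symm hk _ _
  have hb : ∀ k t j x, k ≠ j → γ t j x - b k ≠ 0 := by
    intro k t j x hst
    obtain ⟨s, hk⟩ := ex t
    rw [← h1 s k, sub_ne_zero]
    exact hd _ _ _ _ hk hst.symm _ _
  have hpb : ∀ t j, b j - p t ≠ 0 := by
    intro t j
    obtain ⟨s, hk⟩ := ex t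
    rw [← h1 s j]; exact hp _ _ _ _ hk
  have hpp : ∀ s t, s ≠ t → p t - p s ≠ 0 := by
    intro s t h
    rw [← h0 t 0]; exact hp _ _ _ _ h
  have hbb : ∀ s t, s ≠ t → b t - b s ≠ 0 := by
    intro s t h
    rw [← h1 0 t]; exact hb _ _ _ _ h
  let sg : Fin 3 → Fin 3 → ℤ := fun s t => if s < t then 0 else 1
  let M : Fin 3 → Fin 3 → ℂ := fun s j => Complex.log (b j - p s)
  let P : Fin 3 → Fin 3 → ℂ := fun s t => Complex.log (p (max s t) - p (min s t))
  let Q : Fin 3 → Fin 3 → ℂ := fun s t => Complex.log (b (max s t) - b (min s t))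
  have hn : ∀ s t j, ∃ n : ℤ, s ≠ t → logDelta (fun x => γ t j x - p s) =
      M s j - P s t + Real.pi * Complex.I * (sg s t + 2 * n) := by
    intro s t j
    by_cases hst : s = t
    · exact ⟨0, fun h => absurd hst h⟩
    have : Complex.exp (logDelta (fun x => γ t j x - p s)) =
       Complex.exp (M s j - P s t + Real.pi * Complex.I * sg s t) := by
      rw [exp_logDelta _ (by have := hc t j; fun_prop) (fun x => hp _ _ _ _ hst), h0, h1]
      rw [Complex.exp_add, Complex.exp_sub, Complex.exp_log (hpb _ _)]
      rcases lt_or_gt_of_ne hst with h | h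
      · simp only [P, sg, max_eq_right h.le, min_eq_left h.le, if_pos h]
        rw [Complex.exp_log (hpp _ _ hst)]; simp
      · simp only [P, sg, max_eq_left h.le, min_eq_right h.le, if_neg h.not_gt]
        rw [Complex.exp_log (hpp _ _ (Ne.symm hst))]
        simp only [Int.cast_one, mul_one, Complex.exp_pi_mul_I]
        rw [← neg_sub (p s) (p t), div_neg]; ring
    obtain ⟨n, hn⟩ := exp_int _ _ this
    exact ⟨n, fun _ => by rw [hn]; ring⟩
  have hm : ∀ k t j, ∃ n : ℤ, k ≠ j → logDelta (fun x => γ t j x - b k) =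
      Q k j - M t k + Real.pi * Complex.I * (1 - sg k j + 2 * n) := by
    intro s t j
    by_cases hst : s = j
    · exact ⟨0, fun h => absurd hst h⟩
    have : Complex.exp (logDelta (fun x => γ t j x - b s)) =
       Complex.exp (Q s j - M t s + Real.pi * Complex.I * (1 - sg s j)) := by
      rw [exp_logDelta _ (by have := hc t j; fun_prop) (fun x => hb _ _ _ _ hst), h0, h1]
      rw [Complex.exp_add, Complex.exp_sub, Complex.exp_log (hpb _ _)]
      rcases lt_or_gt_of_ne hst with h | h
      · simp only [Q, sg, max_eq_right h.le, min_eq_left h.le, if_pos h]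
        rw [Complex.exp_log (hbb _ _ hst)]
        simp only [Int.cast_zero, sub_zero, mul_one, Complex.exp_pi_mul_I]
        rw [← neg_sub (b s) (p t), div_neg]; ring
      · simp only [Q, sg, max_eq_left h.le, min_eq_right h.le, if_neg h.not_gt]
        rw [Complex.exp_log (hbb _ _ (Ne.symm hst))]
        simp only [Int.cast_one, sub_self, mul_zero, Complex.exp_zero, mul_one]
        rw [← neg_sub (b s) (p t), ← neg_sub (b s) (b j), neg_div_neg_eq]
    obtain ⟨n, hn⟩ := exp_int _ _ this
    exact ⟨n, fun _ => by rw [hn]; ring⟩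
  choose n hn using hn
  choose m hm using hm
  have Psymm : ∀ s t, P s t = P t s := fun s t => by simp only [P, max_comm, min_comm]
  have Qsymm : ∀ s t, Q s t = Q t s := fun s t => by simp only [Q, max_comm, min_comm]
  have key : ∀ s t j k, s ≠ t → j ≠ k →
      sg s t + 2 * n s t j + 1 - sg j k + 2 * m j s k =
      sg t s + 2 * n t s k + 1 - sg k j + 2 * m k t j := by
    intro s t j k hst hjk
    have e := log_square (γ t j) (γ s k) (hc _ _) (hc _ _) (hd _ _ _ _ hst.symm hjk)
    simp only [h0, h1] at e
    rw [hn _ _ _ hst, hn _ _ _ hst.symm, hm _ _ _ hjk, hm _ _ _ hjk.symm, Psymm t s,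
      Qsymm k j] at e
    have hpi : (Real.pi : ℂ) * Complex.I ≠ 0 := by simp [Real.pi_ne_zero]
    have e2 : (Real.pi : ℂ) * Complex.I *
      ((sg s t + 2 * n s t j + 1 - sg j k + 2 * m j s k : ℤ) : ℂ) =
      (Real.pi : ℂ) * Complex.I *
        ((sg t s + 2 * n t s k + 1 - sg k j + 2 * m k t j : ℤ) : ℂ) := by
      push_cast
      linear_combination e
    exact_mod_cast mul_left_cancel₀ hpi e2
  have k1 := fun j k h => key 0 1 j k (by decide) h
  have k2 := fun j k h => key 0 2 j k (by decide) h
  have k3 := fun j k h => key 1 2 j k (by decide) h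
  have a1 := k1 0 1 (by decide)
  have a2 := k1 0 2 (by decide)
  have a3 := k1 1 2 (by decide)
  have a4 := k1 1 0 (by decide)
  have a5 := k1 2 0 (by decide)
  have a6 := k1 2 1 (by decide)
  have b1 := k2 0 1 (by decide)
  have b2 := k2 0 2 (by decide)
  have b3 := k2 1 2 (by decide)
  have b4 := k2 1 0 (by decide)
  have b5 := k2 2 0 (by decide)
  have b6 := k2 2 1 (by decide)
  have c1 := k3 0 1 (by decide)
  have c2 := k3 0 2 (by decide)
  have c3 := k3 1 2 (by decide)
  have c4 := k3 1 0 (by decide)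
  have c5 := k3 2 0 (by decide)
  have c6 := k3 2 1 (by decide)
  have s01 : sg 0 1 = 0 := rfl
  have s02 : sg 0 2 = 0 := rfl
  have s12 : sg 1 2 = 0 := rfl
  have s10 : sg 1 0 = 1 := rfl
  have s20 : sg 2 0 = 1 := rfl
  have s21 : sg 2 1 = 1 := rfl
  clear k1 k2 k3 key hn hm hd hp hb hpb hpp hbb
  clear_value sg
  omega

lemma exists_conn_nhd {X : Type*} [MetricSpace X] [LocallyConnectedSpace X] (z : X) (U : Set X)
    (hU : U ∈ 𝓝 z) : ∃ N ∈ 𝓝 z, IsClosed N ∧ IsPreconnected N ∧ N ⊆ U := by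
  obtain ⟨W, hW, hWc, hWU⟩ := exists_mem_nhds_isClosed_subset hU
  obtain ⟨V, hV, hVp, hVW⟩ := locallyConnectedSpace_iff_connected_subsets.1 inferInstance z W hW
  exact ⟨closure V, mem_of_superset hV subset_closure, isClosed_closure, hVp.closure,
    (closure_minimal hVW hWc).trans hWU⟩

lemma exists_cont {X : Type*} [MetricSpace X] [LocallyConnectedSpace X] {U : Set X}
    (hU : IsOpen U) (hc : IsPreconnected U) {x y : X} (hx : x ∈ U) (hy : y ∈ U) :
    ∃ C, IsClosed C ∧ IsPreconnected C ∧ x ∈ C ∧ y ∈ C ∧ C ⊆ U := by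
  refine hc.induction₂ (fun x y => ∃ C, IsClosed C ∧ IsPreconnected C ∧ x ∈ C ∧ y ∈ C ∧ C ⊆ U)
    ?_ ?_ ?_ hx hy
  · intro z hz
    obtain ⟨N, hN, hNc, hNp, hNU⟩ := exists_conn_nhd z U (hU.mem_nhds hz)
    filter_upwards [mem_nhdsWithin_of_mem_nhds hN] with w hw
    exact ⟨N, hNc, hNp, mem_of_mem_nhds hN, hw, hNU⟩
  · rintro a b c ha hb hc' ⟨C, h1, h2, h3, h4, h5⟩ ⟨D, g1, g2, g3, g4, g5⟩
    exact ⟨C ∪ D, h1.union g1, h2.union b h4 g3 g2, Or.inl h3, Or.inr g4, union_subset h5 g5⟩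
  · rintro a b ha hb ⟨C, h1, h2, h3, h4, h5⟩
    exact ⟨C, h1, h2, h4, h3, h5⟩

/-- intersection of all closed connected sets containing `x` and `z` -/
def hull {X : Type*} [TopologicalSpace X] (x z : X) : Set X :=
  ⋂₀ {C | IsClosed C ∧ IsPreconnected C ∧ x ∈ C ∧ z ∈ C}

set_option linter.unusedSectionVars false

section
variable {X : Type*} [MetricSpace X] [CompactSpace X] [ConnectedSpace X] [LocallyConnectedSpace X]

lemma mem_hull {X : Type*} [TopologicalSpace X] (x z : X) : z ∈ hull x z := fun _ h => h.2.2.2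

lemma hull_subset {X : Type*} [TopologicalSpace X] {x z : X} {C : Set X} (h1 : IsClosed C)
    (h2 : IsPreconnected C) (h3 : x ∈ C) (h4 : z ∈ C) : hull x z ⊆ C :=
  sInter_subset_of_mem ⟨h1, h2, h3, h4⟩

lemma hull_self (x : X) : hull x x = {x} :=
  Subset.antisymm (hull_subset isClosed_singleton isPreconnected_singleton rfl rfl)
    (singleton_subset_iff.2 (mem_hull x x))

lemma hull_union {X : Type*} [TopologicalSpace X] {x z y : X} {N : Set X} (h1 : IsClosed N)
    (h2 : IsPreconnected N) (h3 : y ∈ N) (h4 : z ∈ N) : hull x z ⊆ hull x y ∪ N := by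
  intro w hw
  by_contra hcon
  rw [mem_union, not_or] at hcon
  apply hcon.1
  intro C hC
  have := hull_subset (hC.1.union h1) (hC.2.1.union y hC.2.2.2 h3 h2) (Or.inl hC.2.2.1)
    (Or.inr h4) hw
  exact this.resolve_right hcon.2

lemma exists_sep (x y z : X) (hyz : y ≠ z) :
    ∃ C, IsClosed C ∧ IsPreconnected C ∧ x ∈ C ∧ (y ∈ C ∧ z ∉ C ∨ z ∈ C ∧ y ∉ C) := by
  by_cases hxz : x = z
  · subst hxz
    exact ⟨{x}, isClosed_singleton, isPreconnected_singleton, rfl, Or.inr ⟨rfl, hyz⟩⟩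
  have ho : IsOpen ({z}ᶜ : Set X) := isOpen_compl_singleton
  have hxm : x ∈ ({z}ᶜ : Set X) := hxz
  set W := connectedComponentIn ({z}ᶜ : Set X) x with hW
  have hWo : IsOpen W := ho.connectedComponentIn
  have hWp : IsPreconnected W := isPreconnected_connectedComponentIn
  have hxW : x ∈ W := mem_connectedComponentIn hxm
  have hWs : W ⊆ {z}ᶜ := connectedComponentIn_subset _ _
  by_cases hyW : y ∈ W
  · obtain ⟨C, h1, h2, h3, h4, h5⟩ := exists_cont hWo hWp hxW hyW
    exact ⟨C, h1, h2, h3, Or.inl ⟨h4, fun h => hWs (h5 h) rfl⟩⟩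
  · have hcl : closure W \ {z} ⊆ W := by
      apply IsPreconnected.subset_connectedComponentIn
      · exact hWp.subset_closure (fun w hw => ⟨subset_closure hw, hWs hw⟩) sdiff_subset
      · exact ⟨subset_closure hxW, hxz⟩
      · exact fun w hw => hw.2
    refine ⟨closure W, isClosed_closure, hWp.closure, subset_closure hxW, Or.inr ⟨?_, ?_⟩⟩
    · by_contra hz
      have : IsClosed W := by
        rw [← closure_subset_iff_isClosed]
        exact fun w hw => hcl ⟨hw, fun h => hz (h ▸ hw)⟩
      have := IsClopen.eq_univ ⟨this, hWo⟩ ⟨x, hxW⟩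
      exact hWs (this ▸ mem_univ z) rfl
    · exact fun h => hyW (hcl ⟨h, hyz⟩)

lemma continuous_infDist_hull (x q : X) : Continuous fun z => Metric.infDist q (hull x z) := by
  rw [Metric.continuous_iff']
  intro z ε hε
  obtain ⟨N, hN, hNc, hNp, hNU⟩ := exists_conn_nhd z _ (Metric.ball_mem_nhds z (half_pos (half_pos hε)))
  have key : ∀ a ∈ N, ∀ b ∈ N,
      Metric.infDist q (hull x a) - ε / 2 ≤ Metric.infDist q (hull x b) := by
    intro a ha b hb
    rw [Metric.le_infDist ⟨b, mem_hull x b⟩]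
    intro w hw
    rcases hull_union hNc hNp ha hb hw with h | h
    · linarith [Metric.infDist_le_dist_of_mem (x := q) h]
    · have h1 := Metric.infDist_le_dist_of_mem (x := q) (mem_hull x a)
      have h2 := dist_triangle q w a
      have h3 := dist_triangle_right w a z
      have h4 := Metric.mem_ball.1 (hNU h)
      have h5 := Metric.mem_ball.1 (hNU ha)
      linarith
  filter_upwards [hN] with w hw
  have h1 := key w hw z (mem_of_mem_nhds hN)
  have h2 := key z (mem_of_mem_nhds hN) w hw
  rw [Real.dist_eq, abs_lt]
  constructor <;> linarith

theorem arc_of_chain (x : X) (hch : ∀ C D : Set X, IsClosed C → IsPreconnected C → x ∈ C →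
    IsClosed D → IsPreconnected D → x ∈ D → C ⊆ D ∨ D ⊆ C) :
    ∃ h : X → ℝ, Continuous h ∧ Function.Injective h ∧ h x = 0 ∧ ∀ z, 0 ≤ h z := by
  let q := TopologicalSpace.denseSeq X
  let g : ℕ → X → ℝ := fun n z => (1 / 2 : ℝ) ^ n * (dist (q n) x - Metric.infDist (q n) (hull x z))
  have hxh : ∀ z, x ∈ hull x z := fun z _ h => h.2.2.1
  have hg0 : ∀ n z, 0 ≤ g n z := by
    intro n z
    apply mul_nonneg (by positivity)
    rw [sub_nonneg]
    exact Metric.infDist_le_dist_of_mem (hxh z)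
  have hgb : ∀ n z, ‖g n z‖ ≤ (1 / 2 : ℝ) ^ n * Metric.diam (univ : Set X) := by
    intro n z
    rw [Real.norm_of_nonneg (hg0 n z)]
    apply mul_le_mul_of_nonneg_left _ (by positivity)
    have := Metric.dist_le_diam_of_mem isCompact_univ.isBounded (mem_univ (q n)) (mem_univ x)
    have := Metric.infDist_nonneg (x := q n) (s := hull x z)
    linarith
  have hsum : Summable fun n => (1 / 2 : ℝ) ^ n * Metric.diam (univ : Set X) :=
    (summable_geometric_two).mul_right _
  have hgs : ∀ z, Summable fun n => g n z := fun z => Summable.of_norm_bounded hsum (fun n => hgb n z)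
  have mono : ∀ y z, (∃ C, IsClosed C ∧ IsPreconnected C ∧ x ∈ C ∧ y ∈ C ∧ z ∉ C) →
      ∑' n, g n y < ∑' n, g n z := by
    rintro y z ⟨C, h1, h2, h3, h4, h5⟩
    have hCz : C ⊆ hull x z := by
      rintro w hw D ⟨d1, d2, d3, d4⟩
      rcases hch C D h1 h2 h3 d1 d2 d3 with h | h
      · exact h hw
      · exact absurd (h d4) h5
    have hyC : hull x y ⊆ C := hull_subset h1 h2 h3 h4
    have hδ := (h1.notMem_iff_infDist_pos ⟨x, h3⟩).1 h5
    obtain ⟨_, hn, n, rfl⟩ := (TopologicalSpace.denseRange_denseSeq X).inter_open_nonempty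
      (Metric.ball z (Metric.infDist z C / 2)) Metric.isOpen_ball
      ⟨z, Metric.mem_ball_self (by linarith)⟩
    rw [Metric.mem_ball] at hn
    refine Summable.tsum_lt_tsum (i := n) ?_ ?_ (hgs y) (hgs z)
    · intro m
      apply mul_le_mul_of_nonneg_left _ (by positivity)
      have := Metric.infDist_le_infDist_of_subset (x := q m) (hyC.trans hCz) ⟨y, mem_hull x y⟩
      linarith
    · apply mul_lt_mul_of_pos_left _ (by positivity)
      have a1 := Metric.infDist_le_dist_of_mem (x := q n) (mem_hull x z)
      have a2 := Metric.infDist_le_infDist_of_subset (x := q n) hyC ⟨y, mem_hull x y⟩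
      have a3 := Metric.infDist_le_infDist_add_dist (x := z) (y := q n) (s := C)
      rw [dist_comm z] at a3
      change dist (q n) z < _ at hn
      change _ ≤ _ + dist (q n) z at a3
      linarith
  refine ⟨fun z => ∑' n, g n z, ?_, ?_, ?_, ?_⟩
  · apply continuous_tsum _ hsum hgb
    intro n
    exact continuous_const.mul (continuous_const.sub (continuous_infDist_hull x (q n)))
  · intro y z hyz
    by_contra hne
    obtain ⟨C, h1, h2, h3, h | h⟩ := exists_sep x y z hne
    · exact (mono y z ⟨C, h1, h2, h3, h⟩).ne hyz
    · exact (mono z y ⟨C, h1, h2, h3, h⟩).ne hyz.symm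
  · simp [g, hull_self]
  · intro z
    exact tsum_nonneg (fun n => hg0 n z)
end

/-- a weak form of a triod -/
def HasTriod (X : Type*) [TopologicalSpace X] : Prop :=
  ∃ (p : X) (e : Fin 3 → X) (C : Fin 3 → Set X),
    (∀ j, IsClosed (C j) ∧ IsPreconnected (C j) ∧ p ∈ C j ∧ e j ∈ C j) ∧
    ∀ j k, j ≠ k → e j ∉ C k

lemma inter_conn {X : Type*} [TopologicalSpace X] {N A B : Set X} {z : X} (hN : IsPreconnected N)
    (hA : IsClosed A) (hB : IsClosed B) (hAB : A ∪ B = univ) (hz : z ∈ N) (hzA : z ∈ A)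
    (hi : ∀ w ∈ N, w ∈ A → w ∈ B → w = z) : IsPreconnected (N ∩ A) := by
  rw [isPreconnected_iff_subset_of_disjoint_closed]
  have main : ∀ u v : Set X, IsClosed u → IsClosed v → N ∩ A ⊆ u ∪ v → N ∩ A ∩ (u ∩ v) = ∅ →
      z ∈ u → N ∩ A ⊆ u ∨ N ∩ A ⊆ v := by
    intro u v hu hv huv hd hzu
    have hd' : ∀ w, w ∈ N → w ∈ A → w ∈ u → w ∈ v → False := fun w h1 h2 h3 h4 => by
      have : w ∈ N ∩ A ∩ (u ∩ v) := ⟨⟨h1, h2⟩, h3, h4⟩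
      rw [hd] at this; exact this
    have := isPreconnected_iff_subset_of_disjoint_closed.1 hN (u ∩ A ∪ B) (v ∩ A)
      ((hu.inter hA).union hB) (hv.inter hA) ?_ ?_
    · rcases this with h | h
      · left
        rintro w ⟨hwN, hwA⟩
        rcases h hwN with h' | h'
        · exact h'.1
        · rw [hi w hwN hwA h']; exact hzu
      · right
        rintro w ⟨hwN, hwA⟩
        exact (h hwN).1
    · intro w hw
      by_cases hwA : w ∈ A
      · rcases huv ⟨hw, hwA⟩ with h | h
        · exact Or.inl (Or.inl ⟨h, hwA⟩)
        · exact Or.inr ⟨h, hwA⟩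
      · have : w ∈ A ∪ B := hAB ▸ mem_univ w
        exact Or.inl (Or.inr (this.resolve_left hwA))
    · rw [eq_empty_iff_forall_notMem]
      rintro w ⟨hwN, h | h, h2⟩
      · exact hd' w hwN h.2 h.1 h2.1
      · have := hi w hwN h2.2 h
        subst this
        exact hd' w hz hzA hzu h2.1
  intro u v hu hv huv hd
  rcases huv ⟨hz, hzA⟩ with h | h
  · exact main u v hu hv huv hd h
  · exact (main v u hv hu (by rwa [union_comm]) (by rwa [inter_comm v u]) h).symm

lemma lc_half {X : Type*} [MetricSpace X] [LocallyConnectedSpace X] {A B : Set X} {a b : X}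
    (hA : IsClosed A) (hB : IsClosed B) (hAB : A ∪ B = univ) (hi : A ∩ B ⊆ {a, b}) :
    LocallyConnectedSpace A := by
  rw [locallyConnectedSpace_iff_connected_subsets]
  rintro ⟨x, hx⟩ U hU
  rw [nhds_subtype_eq_comap, mem_comap] at hU
  obtain ⟨U', hU', hUU⟩ := hU
  have fin : ∀ N : Set X, N ∈ 𝓝 x → N ⊆ U' → IsPreconnected (N ∩ A) →
      ∃ V ∈ 𝓝 (⟨x, hx⟩ : A), IsPreconnected V ∧ V ⊆ U := by
    intro N hN hNU hc
    refine ⟨Subtype.val ⁻¹' N, ?_, ?_, (preimage_mono hNU).trans hUU⟩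
    · rw [nhds_subtype_eq_comap]; exact preimage_mem_comap hN
    · rw [← Topology.IsInducing.subtypeVal.isPreconnected_image, image_preimage_eq_inter_range,
        Subtype.range_coe]
      exact hc
  by_cases hxB : x ∈ B
  · have hF : (({a, b} : Set X) \ {x})ᶜ ∈ 𝓝 x := by
      apply IsOpen.mem_nhds
      · rw [isOpen_compl_iff]
        exact ((Set.toFinite _).subset sdiff_subset).isClosed
      · simp
    obtain ⟨N, hN, -, hNp, hNU⟩ := exists_conn_nhd x _ (inter_mem hU' hF)
    refine fin N hN (fun w hw => (hNU hw).1) ?_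
    refine inter_conn hNp hA hB hAB (mem_of_mem_nhds hN) hx ?_
    intro w hw hwA hwB
    by_contra hne
    exact (hNU hw).2 ⟨hi ⟨hwA, hwB⟩, hne⟩
  · obtain ⟨N, hN, -, hNp, hNU⟩ := exists_conn_nhd x _ (inter_mem hU' (hB.isOpen_compl.mem_nhds hxB))
    refine fin N hN (fun w hw => (hNU hw).1) ?_
    rwa [inter_eq_left.2]
    intro w hw
    have : w ∈ A ∪ B := hAB ▸ mem_univ w
    exact this.resolve_right (hNU hw).2

lemma half {X : Type*} [MetricSpace X] [CompactSpace X] [LocallyConnectedSpace X]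
    (ht : ¬ HasTriod X) {A B : Set X} {a b v : X}
    (hA : IsClosed A) (hB : IsClosed B) (hAB : A ∪ B = univ) (hi : A ∩ B ⊆ {a, b})
    (haA : a ∈ A) (haB : a ∈ B) (hAp : IsPreconnected A) (hBp : IsPreconnected B)
    (hv : v ∈ B) (hvA : v ∉ A) :
    ∃ h : X → ℝ, ContinuousOn h A ∧ InjOn h A ∧ h a = 0 ∧ ∀ z ∈ A, 0 ≤ h z := by
  classical
  have : LocallyConnectedSpace A := lc_half hA hB hAB hi
  have : CompactSpace A := isCompact_iff_compactSpace.1 hA.isCompact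
  have : ConnectedSpace A := isConnected_iff_connectedSpace.1 ⟨⟨a, haA⟩, hAp⟩
  have aux : ∀ C D : Set A, IsPreconnected C → ⟨a, haA⟩ ∈ C → IsClosed D → ⟨a, haA⟩ ∈ D →
      ¬ C ⊆ D → ∃ e ∈ C, e ∉ D ∧ (e : X) ∉ B := by
    intro C D hC haC hD haD hCD
    by_contra hcon
    push Not at hcon
    have hb : ∀ e ∈ C, e ∉ D → (e : X) = b := by
      intro e he heD
      rcases hi ⟨e.2, hcon e he heD⟩ with h | h
      · exact absurd (by convert haD) heD
      · exact h
    obtain ⟨e, he, heD⟩ := not_subset.1 hCD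
    have hcl : IsClosed ({e} : Set A) := isClosed_singleton
    have key : C ⊆ D ∨ C ⊆ {e} := by
      refine isPreconnected_iff_subset_of_disjoint_closed.1 hC D {e} hD hcl ?_ ?_
      · intro w hw
        by_cases hwD : w ∈ D
        · exact Or.inl hwD
        · right
          exact Subtype.ext ((hb w hw hwD).trans (hb e he heD).symm)
      · rw [eq_empty_iff_forall_notMem]
        rintro w ⟨-, h1, h2⟩
        rw [mem_singleton_iff] at h2
        exact heD (h2 ▸ h1)
    rcases key with h | h
    · exact hCD h
    · have := h haC
      rw [mem_singleton_iff] at this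
      exact heD (this ▸ haD)
  obtain ⟨h, h1, h2, h3, h4⟩ := arc_of_chain (⟨a, haA⟩ : A) (by
    intro C D hC hCp haC hD hDp haD
    by_contra hcon
    rw [not_or] at hcon
    obtain ⟨e, heC, heD, heB⟩ := aux C D hCp haC hD haD hcon.1
    obtain ⟨f, hfD, hfC, hfB⟩ := aux D C hDp haD hC haC hcon.2
    apply ht
    have im : ∀ S : Set A, ∀ w : A, w ∉ S → (w : X) ∉ Subtype.val '' S := by
      rintro S w hw ⟨w', hw', e⟩
      exact hw (Subtype.ext e ▸ hw')
    have imv : ∀ S : Set A, v ∉ Subtype.val '' S := by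
      rintro S ⟨w', hw', e⟩
      exact hvA (e ▸ w'.2)
    refine ⟨a, ![e, f, v], ![Subtype.val '' C, Subtype.val '' D, B], ?_, ?_⟩
    · intro j
      fin_cases j
      · exact ⟨hA.isClosedEmbedding_subtypeVal.isClosedMap _ hC,
          hCp.image _ continuous_subtype_val.continuousOn, ⟨_, haC, rfl⟩, ⟨_, heC, rfl⟩⟩
      · exact ⟨hA.isClosedEmbedding_subtypeVal.isClosedMap _ hD,
          hDp.image _ continuous_subtype_val.continuousOn, ⟨_, haD, rfl⟩, ⟨_, hfD, rfl⟩⟩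
      · exact ⟨hB, hBp, haB, hv⟩
    · intro j k hjk
      fin_cases j <;> fin_cases k <;> first | exact absurd rfl hjk | skip
      · exact im _ _ heD
      · exact heB
      · exact im _ _ hfC
      · exact hfB
      · exact imv _
      · exact imv _)
  refine ⟨fun x => if hx : x ∈ A then h ⟨x, hx⟩ else 0, ?_, ?_, ?_, ?_⟩
  · rw [continuousOn_iff_continuous_domRestrict]
    have e : A.domRestrict (fun x => if hx : x ∈ A then h ⟨x, hx⟩ else 0) = h := by
      funext x
      simp [Set.domRestrict]
    rw [e]; exact h1
  · intro x hx y hy hxy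
    simp only [hx, hy, dif_pos] at hxy
    exact congrArg Subtype.val (h2 hxy)
  · simp only [haA, dif_pos, h3]
  · intro z hz
    simp only [hz, dif_pos, h4]

lemma half2 {X : Type*} [MetricSpace X] [CompactSpace X] [LocallyConnectedSpace X]
    (ht : ¬ HasTriod X) {A B : Set X} {a b v : X}
    (hA : IsClosed A) (hB : IsClosed B) (hAB : A ∪ B = univ) (hi : A ∩ B ⊆ {a, b})
    (haA : a ∈ A) (haB : a ∈ B) (hAp : IsPreconnected A) (hBp : IsPreconnected B)
    (hv : v ∈ B) (hvA : v ∉ A) (hab : a ≠ b) (hbA : b ∈ A) (hbp : IsPreconnected ({b}ᶜ ∩ A)) :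
    ∃ h : X → ℝ, ContinuousOn h A ∧ InjOn h A ∧ h a = 0 ∧ h b = 1 / 2 ∧
      (∀ z ∈ A, 0 ≤ h z ∧ h z ≤ 1 / 2) ∧ ∀ t, 0 ≤ t → t ≤ 1 / 2 → ∃ z ∈ A, h z = t := by
  obtain ⟨h, h1, h2, h3, h4⟩ := half ht hA hB hAB hi haA haB hAp hBp hv hvA
  have hbpos : 0 < h b := lt_of_le_of_ne (h4 b hbA) (fun e => hab (h2 haA hbA (h3.trans e)))
  have hle : ∀ z ∈ A, h z ≤ h b := by
    intro z hz
    by_contra hcon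
    push Not at hcon
    have hzb : z ≠ b := fun e => by rw [e] at hcon; exact lt_irrefl _ hcon
    have hp := hbp.image h (h1.mono inter_subset_right)
    have := hp.ordConnected.out (x := h a) (y := h z) ⟨a, ⟨hab, haA⟩, rfl⟩ ⟨z, ⟨hzb, hz⟩, rfl⟩
      (show h b ∈ Icc (h a) (h z) from ⟨by rw [h3]; exact hbpos.le, hcon.le⟩)
    obtain ⟨w, ⟨hwb, hwA⟩, hw⟩ := this
    exact hwb (h2 hwA hbA hw)
  refine ⟨fun z => h z / (2 * h b), h1.div_const _, ?_, by simp [h3], by field_simp, ?_, ?_⟩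
  · intro x hx y hy hxy
    apply h2 hx hy
    simp only at hxy
    field_simp at hxy
    exact hxy
  · intro z hz
    refine ⟨div_nonneg (h4 z hz) (by positivity), ?_⟩
    rw [div_le_iff₀ (by positivity)]
    linarith [hle z hz]
  · intro t ht0 ht1
    have hp := hAp.image h h1
    obtain ⟨w, hwA, hw⟩ := hp.ordConnected.out (x := h a) (y := h b) ⟨a, haA, rfl⟩ ⟨b, hbA, rfl⟩
      (show t * (2 * h b) ∈ Icc (h a) (h b) from ⟨by rw [h3]; positivity, by nlinarith⟩)
    exact ⟨w, hwA, by simp only [hw]; field_simp⟩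

lemma split {X : Type*} [TopologicalSpace X] {F : Set X} (hF : IsClosed F)
    (h : ¬ IsPreconnected Fᶜ) : ∃ A B : Set X, IsClosed A ∧ IsClosed B ∧ A ∪ B = univ ∧ A ∩ B = F ∧
      (∃ u ∈ A, u ∉ B) ∧ ∃ v ∈ B, v ∉ A := by
  rw [isPreconnected_iff_subset_of_disjoint] at h
  push Not at h
  obtain ⟨u, v, hu, hv, huv, hd, h1, h2⟩ := h
  have hd' : ∀ w, w ∉ F → w ∈ u → w ∈ v → False := fun w h1 h2 h3 => by
    have : w ∈ Fᶜ ∩ (u ∩ v) := ⟨h1, h2, h3⟩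
    rw [hd] at this; exact this
  obtain ⟨x, hxF, hx⟩ := not_subset.1 h1
  obtain ⟨y, hyF, hy⟩ := not_subset.1 h2
  have hxv := (huv hxF).resolve_left hx
  have hyu := (huv hyF).resolve_right hy
  refine ⟨(v ∩ Fᶜ)ᶜ, (u ∩ Fᶜ)ᶜ, (hv.inter hF.isOpen_compl).isClosed_compl,
    (hu.inter hF.isOpen_compl).isClosed_compl, ?_, ?_, ⟨y, ?_, ?_⟩, ⟨x, ?_, ?_⟩⟩
  · rw [eq_univ_iff_forall]
    intro w
    by_contra hw
    simp only [mem_union, mem_compl_iff, mem_inter_iff, not_or, not_not] at hw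
    exact hd' w hw.1.2 hw.2.1 hw.1.1
  · ext w
    simp only [mem_compl_iff, mem_inter_iff, not_and, not_not]
    constructor
    · intro hw
      by_contra hwF
      rcases huv hwF with h | h
      · exact hwF (hw.2 h)
      · exact hwF (hw.1 h)
    · exact fun h => ⟨fun _ => h, fun _ => h⟩
  · exact fun h => hy h.1
  · exact fun h => h ⟨hyu, hyF⟩
  · exact fun h => hx h.1
  · exact fun h => h ⟨hxv, hxF⟩

lemma glue {X Y : Type*} [TopologicalSpace X] [TopologicalSpace Y] {A B : Set X}
    (hA : IsClosed A) (hB : IsClosed B) (hAB : A ∪ B = univ) (f g : X → Y)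
    (hf : ContinuousOn f A) (hg : ContinuousOn g B) (hfg : ∀ x ∈ A, x ∈ B → f x = g x) :
    ∃ h : X → Y, Continuous h ∧ (∀ x ∈ A, h x = f x) ∧ ∀ x ∈ B, h x = g x := by
  classical
  have e1 : ∀ x ∈ A, (if x ∈ A then f x else g x) = f x := fun x hx => if_pos hx
  have e2 : ∀ x ∈ B, (if x ∈ A then f x else g x) = g x := by
    intro x hx
    split_ifs with h
    · exact hfg x h hx
    · rfl
  refine ⟨fun x => if x ∈ A then f x else g x, ?_, e1, e2⟩
  rw [← continuousOn_univ, ← hAB]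
  exact (hf.congr e1).union_of_isClosed (hg.congr e2) hA hB

theorem classify {X : Type*} [MetricSpace X] [CompactSpace X] [ConnectedSpace X]
    [LocallyConnectedSpace X] (ht : ¬ HasTriod X) :
    (∃ h : X → ℝ, Continuous h ∧ Function.Injective h) ∨
    (∃ f : X → AddCircle (1 : ℝ), Continuous f ∧ Function.Bijective f) := by
  have hcov : ∀ {A B : Set X}, A ∪ B = univ → ∀ z, z ∈ A ∨ z ∈ B := by
    intro A B h z
    have : z ∈ A ∪ B := h ▸ mem_univ z
    exact this
  by_cases hcut : ∃ x : X, ¬ IsPreconnected ({x}ᶜ : Set X)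
  · left
    obtain ⟨x, hx⟩ := hcut
    obtain ⟨A, B, hA, hB, hAB, hi, ⟨u, huA, huB⟩, ⟨v, hvB, hvA⟩⟩ := split isClosed_singleton hx
    have hxAB : x ∈ A ∩ B := hi ▸ rfl
    have hi' : ∀ w, w ∈ A → w ∈ B → w = x := fun w h1 h2 => by
      have : w ∈ A ∩ B := ⟨h1, h2⟩
      rwa [hi] at this
    have hAp : IsPreconnected A := by
      rw [← univ_inter A]
      exact inter_conn isPreconnected_univ hA hB hAB (mem_univ x) hxAB.1 (fun w _ => hi' w)
    have hBp : IsPreconnected B := by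
      rw [← univ_inter B]
      exact inter_conn isPreconnected_univ hB hA (by rwa [union_comm]) (mem_univ x) hxAB.2
        (fun w _ h1 h2 => hi' w h2 h1)
    obtain ⟨f, f1, f2, f3, f4⟩ := half (b := x) ht hA hB hAB (by simp [hi]) hxAB.1 hxAB.2 hAp hBp
      hvB hvA
    obtain ⟨g, g1, g2, g3, g4⟩ := half (b := x) ht hB hA (by rwa [union_comm])
      (by simp [inter_comm, hi]) hxAB.2 hxAB.1 hBp hAp huA huB
    obtain ⟨h, h1, h2, h3⟩ := glue hA hB hAB f (fun z => - g z) f1 g1.neg (by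
      intro z hz hz'
      rw [hi' z hz hz', f3, g3, neg_zero])
    have mix : ∀ y ∈ A, ∀ z ∈ B, h y = h z → y = z := by
      intro y hy z hz e
      rw [h2 y hy, h3 z hz] at e
      have a1 := f4 y hy
      have a2 := g4 z hz
      rw [f2 hy hxAB.1 (by linarith : f y = f x), g2 hz hxAB.2 (by linarith : g z = g x)]
    refine ⟨h, h1, fun y z e => ?_⟩
    rcases hcov hAB y with hy | hy <;> rcases hcov hAB z with hz | hz
    · exact f2 hy hz (by rw [← h2 y hy, ← h2 z hz, e])
    · exact mix y hy z hz e
    · exact (mix z hz y hy e.symm).symm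
    · have : - g y = - g z := by rw [← h3 y hy, ← h3 z hz, e]
      exact g2 hy hz (neg_injective this)
  push Not at hcut
  by_cases hpair : ∃ a b : X, a ≠ b ∧ ¬ IsPreconnected ({a, b}ᶜ : Set X)
  · right
    obtain ⟨a, b, hab, hx⟩ := hpair
    obtain ⟨A, B, hA, hB, hAB, hi, ⟨u, huA, huB⟩, ⟨v, hvB, hvA⟩⟩ :=
      split (Set.toFinite _).isClosed hx
    have haAB : a ∈ A ∩ B := hi ▸ Or.inl rfl
    have hbAB : b ∈ A ∩ B := hi ▸ Or.inr rfl
    have hi' : ∀ w, w ∈ A → w ∈ B → w = a ∨ w = b := fun w h1 h2 => by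
      have : w ∈ A ∩ B := ⟨h1, h2⟩
      rwa [hi] at this
    have hBA : B ∪ A = univ := by rwa [union_comm]
    have sub : ∀ A B : Set X, IsClosed A → IsClosed B → A ∪ B = univ →
        (∀ w, w ∈ A → w ∈ B → w = a ∨ w = b) → a ∈ A → b ∈ A → (∃ u ∈ A, u ∉ B) →
        a ∈ B → b ∈ B → IsPreconnected ({b}ᶜ ∩ A) ∧ IsPreconnected A := by
      rintro A B hA hB hAB hi' ha hb ⟨u, huA, huB⟩ haB hbB
      have p1 : IsPreconnected ({b}ᶜ ∩ A) := by
        refine inter_conn (hcut b) hA hB hAB (z := a) hab ha ?_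
        intro w hw h1 h2
        exact (hi' w h1 h2).resolve_right hw
      have p2 : IsPreconnected ({a}ᶜ ∩ A) := by
        refine inter_conn (hcut a) hA hB hAB (z := b) hab.symm hb ?_
        intro w hw h1 h2
        exact (hi' w h1 h2).resolve_left hw
      refine ⟨p1, ?_⟩
      have := p1.union u (show u ∈ ({b}ᶜ ∩ A : Set X) from ⟨fun e => huB (e ▸ hbB), huA⟩)
        (show u ∈ ({a}ᶜ ∩ A : Set X) from ⟨fun e => huB (e ▸ haB), huA⟩) p2
      convert this using 1
      ext w
      simp only [mem_union, mem_inter_iff, mem_compl_iff, mem_singleton_iff]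
      constructor
      · intro hw
        by_cases hwb : w = b
        · exact Or.inr ⟨fun e => hab (e.symm.trans hwb), hw⟩
        · exact Or.inl ⟨hwb, hw⟩
      · rintro (h | h) <;> exact h.2
    obtain ⟨hAb, hAp⟩ := sub A B hA hB hAB hi' haAB.1 hbAB.1 ⟨u, huA, huB⟩ haAB.2 hbAB.2
    obtain ⟨hBb, hBp⟩ := sub B A hB hA hBA (fun w h1 h2 => hi' w h2 h1) haAB.2 hbAB.2
      ⟨v, hvB, hvA⟩ haAB.1 hbAB.1
    obtain ⟨f, f1, f2, f3, f4, f5, f6⟩ := half2 ht hA hB hAB hi.subset haAB.1 haAB.2 hAp hBp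
      hvB hvA hab hbAB.1 hAb
    obtain ⟨g, g1, g2, g3, g4, g5, g6⟩ := half2 ht hB hA hBA
      (by rw [inter_comm]; exact hi.subset) haAB.2 haAB.1 hBp hAp huA huB hab hbAB.2 hBb
    have cc : Continuous (fun t : ℝ => (t : AddCircle (1 : ℝ))) := AddCircle.continuous_mk' 1
    have ceq : ∀ s t : ℝ, (s : AddCircle (1 : ℝ)) = t ↔ ∃ n : ℤ, (n : ℝ) = s - t := by
      intro s t
      rw [← sub_eq_zero, ← AddCircle.coe_sub, AddCircle.coe_eq_zero_iff]
      simp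
    obtain ⟨h, h1, h2, h3⟩ := glue hA hB hAB (fun z => (f z : AddCircle (1 : ℝ)))
      (fun z => ((- g z : ℝ) : AddCircle (1 : ℝ))) (cc.comp_continuousOn f1)
      (cc.comp_continuousOn g1.neg) (by
        intro z hz hz'
        rcases hi' z hz hz' with rfl | rfl
        · simp only [f3, g3, neg_zero]
        · simp only [f4, g4]
          rw [ceq]; exact ⟨1, by norm_num⟩)
    have small : ∀ (n : ℤ) (r : ℝ), (n : ℝ) = r → -1 < r → r < 1 → r = 0 := by
      intro n r hn h1 h2
      rw [← hn] at h1 h2 ⊢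
      have a1 : (-1 : ℤ) < n := by exact_mod_cast h1
      have a2 : n < 1 := by exact_mod_cast h2
      have : n = 0 := by omega
      simp [this]
    have mix : ∀ y ∈ A, ∀ z ∈ B, h y = h z → y = z := by
      intro y hy z hz e
      rw [h2 y hy, h3 z hz, ceq] at e
      obtain ⟨n, hn⟩ := e
      have a1 := f5 y hy
      have a2 := g5 z hz
      by_cases h1 : f y - -g z = 1
      · rw [f2 hy hbAB.1 (by linarith : f y = f b), g2 hz hbAB.2 (by linarith : g z = g b)]
      · have := small n _ hn (by linarith) (lt_of_le_of_ne (by linarith) h1)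
        rw [f2 hy haAB.1 (by linarith : f y = f a), g2 hz haAB.2 (by linarith : g z = g a)]
    refine ⟨h, h1, fun y z e => ?_, fun θ => ?_⟩
    · rcases hcov hAB y with hy | hy <;> rcases hcov hAB z with hz | hz
      · rw [h2 y hy, h2 z hz, ceq] at e
        obtain ⟨n, hn⟩ := e
        have a1 := f5 y hy
        have a2 := f5 z hz
        have := small n _ hn (by linarith) (by linarith)
        exact f2 hy hz (by linarith)
      · exact mix y hy z hz e
      · exact (mix z hz y hy e.symm).symm
      · rw [h3 y hy, h3 z hz, ceq] at e
        obtain ⟨n, hn⟩ := e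
        have a1 := g5 y hy
        have a2 := g5 z hz
        have := small n _ hn (by linarith) (by linarith)
        exact g2 hy hz (by linarith)
    · obtain ⟨t, rfl⟩ := QuotientAddGroup.mk_surjective θ
      have t0 := Int.fract_nonneg t
      have t1 := Int.fract_lt_one t
      have t2 := Int.self_sub_floor t
      by_cases hle : Int.fract t ≤ 1 / 2
      · obtain ⟨z, hz, hzt⟩ := f6 _ t0 hle
        refine ⟨z, ?_⟩
        rw [h2 z hz]
        exact (ceq _ _).2 ⟨-⌊t⌋, by push_cast; linarith⟩
      · push Not at hle
        obtain ⟨z, hz, hzt⟩ := g6 (1 - Int.fract t) (by linarith) (by linarith)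
        refine ⟨z, ?_⟩
        rw [h3 z hz]
        exact (ceq _ _).2 ⟨-⌊t⌋ - 1, by push_cast; linarith⟩
  push Not at hpair
  rcases subsingleton_or_nontrivial X with hs | hs
  · exact Or.inl ⟨fun _ => 0, continuous_const, fun x y _ => Subsingleton.elim x y⟩
  exfalso
  apply ht
  have : Infinite X := PreconnectedSpace.infinite
  let φ := Infinite.natEmbedding X
  have hφ : ∀ m n : ℕ, φ m = φ n → m = n := fun m n h => φ.injective h
  have : ∀ j : Fin 3, ∃ C, IsClosed C ∧ IsPreconnected C ∧ φ 3 ∈ C ∧ φ j ∈ C ∧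
      C ⊆ ({φ ((j + 1 : Fin 3) : ℕ), φ ((j + 2 : Fin 3) : ℕ)}ᶜ : Set X) := by
    intro j
    apply exists_cont (Set.toFinite _).isClosed.isOpen_compl
    · apply hpair
      intro e
      have := hφ _ _ e
      clear e; revert this; revert j; decide
    · rintro (e | e) <;>
      · have := hφ _ _ e
        clear e; revert this; revert j; decide
    · rintro (e | e) <;>
      · have := hφ _ _ e
        clear e; revert this; revert j; decide
  choose C h1 h2 h3 h4 h5 using this
  refine ⟨φ 3, fun j => φ j, C, fun j => ⟨h1 j, h2 j, h3 j, h4 j⟩, ?_⟩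
  intro j k hjk hm
  apply h5 k hm
  have : j = k + 1 ∨ j = k + 2 := by clear hm; revert hjk; revert j k; decide
  rcases this with rfl | rfl
  · exact Or.inl rfl
  · exact Or.inr rfl

lemma uniform_thickenings {ι Y : Type*} [Finite ι] [MetricSpace Y] (s t : ι → Set Y)
    (hs : ∀ i, IsCompact (s i)) (ht : ∀ i, IsClosed (t i)) (h : ∀ i, Disjoint (s i) (t i)) :
    ∃ δ, 0 < δ ∧ ∀ i, Disjoint (Metric.thickening δ (s i)) (Metric.thickening δ (t i)) := by
  have ev : ∀ᶠ δ in 𝓝[>] (0 : ℝ), ∀ i,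
      Disjoint (Metric.thickening δ (s i)) (Metric.thickening δ (t i)) := by
    rw [eventually_all]
    intro i
    obtain ⟨δ, hδ, hd⟩ := (h i).exists_thickenings (hs i) (ht i)
    filter_upwards [Ioo_mem_nhdsGT hδ] with ε hε
    exact hd.mono (Metric.thickening_mono hε.2.le _) (Metric.thickening_mono hε.2.le _)
  obtain ⟨δ, h1, h2⟩ := (ev.and self_mem_nhdsWithin).exists
  exact ⟨δ, h2, h1⟩

lemma thickening_preconnected (s : Set (ℝ × ℝ)) (hs : IsPreconnected s) (δ : ℝ) :
    IsPreconnected (Metric.thickening δ s) := by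
  have e : (fun z : (ℝ × ℝ) × (ℝ × ℝ) => z.1 + z.2) '' (s ×ˢ Metric.ball 0 δ) =
      Metric.thickening δ s := by
    ext w
    rw [Metric.mem_thickening_iff]
    constructor
    · rintro ⟨⟨x, y⟩, ⟨hx, hy⟩, rfl⟩
      exact ⟨x, hx, by simpa [dist_eq_norm] using hy⟩
    · rintro ⟨x, hx, hd⟩
      exact ⟨(x, w - x), ⟨hx, by simpa [dist_eq_norm] using hd⟩, by simp⟩
  rw [← e]
  exact (hs.prod (convex_ball _ _).isPreconnected).image _ (by fun_prop)

/-- `K` contains a weak triod whose feet lie in the given closed balls. -/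
def GoodAt (K : Set (ℝ × ℝ)) (q : Fin 3 → ℝ × ℝ) (r : Fin 3 → ℝ) : Prop :=
  ∃ (p : ℝ × ℝ) (C : Fin 3 → Set (ℝ × ℝ)),
    (∀ j, IsCompact (C j) ∧ IsPreconnected (C j) ∧ C j ⊆ K ∧ p ∈ C j ∧
      (C j ∩ Metric.closedBall (q j) (r j)).Nonempty) ∧
    ∀ j k, j ≠ k → Disjoint (Metric.closedBall (q j) (r j)) (C k) ∧
      Disjoint (Metric.closedBall (q j) (r j)) (Metric.closedBall (q k) (r k))

theorem no_three (K : Fin 3 → Set (ℝ × ℝ)) (hK : ∀ t s, t ≠ s → Disjoint (K t) (K s))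
    (q : Fin 3 → ℝ × ℝ) (r : Fin 3 → ℝ) (h : ∀ t, GoodAt (K t) q r) : False := by
  choose p C h1 h2 using h
  let E : Fin 3 → Fin 3 → Set (ℝ × ℝ) := fun t j => C t j ∪ Metric.closedBall (q j) (r j)
  have hEc : ∀ t j, IsCompact (E t j) := fun t j => (h1 t j).1.union (isCompact_closedBall _ _)
  have hEp : ∀ t j, IsPreconnected (E t j) := by
    intro t j
    obtain ⟨w, hw1, hw2⟩ := (h1 t j).2.2.2.2
    exact (h1 t j).2.1.union w hw1 hw2 (convex_closedBall _ _).isPreconnected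
  have hpE : ∀ t j, p t ∈ E t j := fun t j => Or.inl (h1 t j).2.2.2.1
  have hqE : ∀ t j, q j ∈ E t j := by
    intro t j
    obtain ⟨w, hw1, hw2⟩ := (h1 t j).2.2.2.2
    exact Or.inr (Metric.mem_closedBall_self (dist_nonneg.trans (Metric.mem_closedBall.1 hw2)))
  have hEd : ∀ t s j k, t ≠ s → j ≠ k → Disjoint (E t j) (E s k) := by
    intro t s j k hts hjk
    simp only [E, disjoint_union_left, disjoint_union_right]
    exact ⟨⟨(hK t s hts).mono (h1 t j).2.2.1 (h1 s k).2.2.1, (h2 s j k hjk).1⟩,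
      (h2 t k j hjk.symm).1.symm, (h2 t j k hjk).2⟩
  let I := {x : (Fin 3 × Fin 3) × (Fin 3 × Fin 3) // x.1.1 ≠ x.2.1 ∧ x.1.2 ≠ x.2.2}
  obtain ⟨δ, hδ, hd⟩ := uniform_thickenings (fun x : I => E x.1.1.1 x.1.1.2)
    (fun x : I => E x.1.2.1 x.1.2.2) (fun x => hEc _ _) (fun x => (hEc _ _).isClosed)
    (fun x => hEd _ _ _ _ x.2.1 x.2.2)
  have hj : ∀ t j, JoinedIn (Metric.thickening δ (E t j)) (p t) (q j) := by
    intro t j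
    have hc : IsConnected (Metric.thickening δ (E t j)) :=
      ⟨⟨p t, Metric.self_subset_thickening hδ _ (hpE t j)⟩, thickening_preconnected _ (hEp t j) δ⟩
    exact (Metric.isOpen_thickening.isConnected_iff_isPathConnected.1 hc).joinedIn _
      (Metric.self_subset_thickening hδ _ (hpE t j)) _
      (Metric.self_subset_thickening hδ _ (hqE t j))
  choose γ hγ using hj
  let φ := Complex.equivRealProdCLM.symm
  refine k33 (fun t => φ (p t)) (fun j => φ (q j)) (fun t j x => φ ((γ t j).extend x)) ?_ ?_ ?_ ?_
  · intro t j
    exact φ.continuous.comp (γ t j).continuous_extend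
  · intro t j; simp
  · intro t j; simp
  · intro t s j k hts hjk x y e
    have e' := φ.injective e
    have m : ∀ t j x, (γ t j).extend x ∈ Metric.thickening δ (E t j) := by
      intro t j x
      have : (γ t j).extend x ∈ range (γ t j) := by
        rw [← Path.extend_range]; exact mem_range_self x
      obtain ⟨u, hu⟩ := this
      rw [← hu]; exact hγ t j u
    have := disjoint_left.1 (hd ⟨((t, j), (s, k)), hts, hjk⟩) (m t j x)
    exact this (e' ▸ m s k y)

/-- centers and radii indexed by a countable set -/
noncomputable def ctr (d : Fin 3 → ℕ × ℕ) (j : Fin 3) : ℝ × ℝ :=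
  TopologicalSpace.denseSeq (ℝ × ℝ) (d j).1

/-- radii -/
noncomputable def rad (d : Fin 3 → ℕ × ℕ) (j : Fin 3) : ℝ := 1 / (((d j).2 : ℝ) + 1)

lemma good_of_triod (K : Set (ℝ × ℝ)) (hK : IsCompact K) (h : HasTriod K) :
    ∃ d : Fin 3 → ℕ × ℕ, GoodAt K (ctr d) (rad d) := by
  obtain ⟨p, e, C, h1, h2⟩ := h
  have : CompactSpace K := isCompact_iff_compactSpace.1 hK
  have hCc : ∀ j, IsCompact (Subtype.val '' C j : Set (ℝ × ℝ)) := fun j =>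
    (h1 j).1.isCompact.image continuous_subtype_val
  let I := {x : Fin 3 × Fin 3 // x.1 ≠ x.2}
  obtain ⟨δ, hδ, hd⟩ := uniform_thickenings (fun x : I => ({(e x.1.1 : ℝ × ℝ)} : Set (ℝ × ℝ)))
    (fun x : I => Subtype.val '' C x.1.2) (fun x => isCompact_singleton)
    (fun x => (hCc _).isClosed) (by
      rintro ⟨⟨j, k⟩, hjk⟩
      rw [disjoint_singleton_left]
      rintro ⟨w, hw, he⟩
      exact h2 j k hjk (Subtype.ext he ▸ hw))
  obtain ⟨n, hn⟩ := exists_nat_one_div_lt (half_pos hδ)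
  have hr : (0 : ℝ) < 1 / ((n : ℝ) + 1) := by positivity
  have hm : ∀ j, ∃ m, dist (TopologicalSpace.denseSeq (ℝ × ℝ) m) (e j : ℝ × ℝ) <
      1 / ((n : ℝ) + 1) := by
    intro j
    obtain ⟨_, hm, m, rfl⟩ := (TopologicalSpace.denseRange_denseSeq (ℝ × ℝ)).inter_open_nonempty
      (Metric.ball (e j : ℝ × ℝ) (1 / ((n : ℝ) + 1))) Metric.isOpen_ball
      ⟨e j, Metric.mem_ball_self hr⟩
    exact ⟨m, hm⟩
  choose m hm using hm
  refine ⟨fun j => (m j, n), p, fun j => Subtype.val '' C j, ?_, ?_⟩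
  · intro j
    refine ⟨hCc j, (h1 j).2.1.image _ continuous_subtype_val.continuousOn, ?_,
      ⟨_, (h1 j).2.2.1, rfl⟩, ⟨e j, ⟨_, (h1 j).2.2.2, rfl⟩, ?_⟩⟩
    · rintro _ ⟨w, -, rfl⟩; exact w.2
    · rw [Metric.mem_closedBall, dist_comm]; exact (hm j).le
  · intro j k hjk
    have hsub : ∀ j, Metric.closedBall (ctr (fun j => (m j, n)) j) (rad (fun j => (m j, n)) j) ⊆
        Metric.thickening δ {(e j : ℝ × ℝ)} := by
      intro j w hw
      rw [Metric.thickening_singleton, Metric.mem_ball]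
      have a1 : dist w (TopologicalSpace.denseSeq (ℝ × ℝ) (m j)) ≤ 1 / ((n : ℝ) + 1) := hw
      have a2 := hm j
      have a3 := dist_triangle w (TopologicalSpace.denseSeq (ℝ × ℝ) (m j)) (e j : ℝ × ℝ)
      linarith
    have hD := hd ⟨(j, k), hjk⟩
    refine ⟨hD.mono (hsub j) (Metric.self_subset_thickening hδ _), hD.mono (hsub j) ?_⟩
    refine (hsub k).trans (Metric.thickening_subset_of_subset δ ?_)
    rintro _ rfl
    exact ⟨_, (h1 k).2.2.2, rfl⟩

lemma arc_of_inj (K : Set (ℝ × ℝ)) (hK : IsCompact K) (hc : IsConnected K) (h : K → ℝ)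
    (h1 : Continuous h) (h2 : Function.Injective h) : IsJordanArc K := by
  classical
  have : CompactSpace K := isCompact_iff_compactSpace.1 hK
  have : ConnectedSpace K := isConnected_iff_connectedSpace.1 hc
  have hr : range h = Icc (sInf (range h)) (sSup (range h)) :=
    eq_Icc_of_connected_compact (isConnected_range h1) (isCompact_range h1)
  have hne : (range h).Nonempty := range_nonempty h
  let e : K ≃ₜ range h := (h1.isClosedEmbedding h2).isEmbedding.toHomeomorph
  refine ⟨sInf (range h), sSup (range h),
    fun t => if ht : t ∈ range h then (e.symm ⟨t, ht⟩ : ℝ × ℝ) else 0, ?_, ?_, ?_, ?_⟩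
  · rw [hr] at hne; exact nonempty_Icc.1 hne
  · rw [← hr, continuousOn_iff_continuous_domRestrict]
    have e2 : (range h).domRestrict
        (fun t => if ht : t ∈ range h then (e.symm ⟨t, ht⟩ : ℝ × ℝ) else 0) =
        fun t => (e.symm t : ℝ × ℝ) := by
      funext t
      simp only [Set.domRestrict, t.2, dif_pos]
    rw [e2]
    exact continuous_subtype_val.comp e.symm.continuous
  · rw [← hr]
    intro s hs t ht hst
    simp only [hs, ht, dif_pos] at hst
    exact congrArg Subtype.val (e.symm.injective (Subtype.ext hst))
  · rw [← hr]
    ext w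
    constructor
    · rintro ⟨t, ht, rfl⟩
      simp only [ht, dif_pos]
      exact (e.symm ⟨t, ht⟩).2
    · intro hw
      refine ⟨e ⟨w, hw⟩, (e ⟨w, hw⟩).2, ?_⟩
      simp only [(e ⟨w, hw⟩).2, dif_pos, Subtype.coe_eta, Homeomorph.symm_apply_apply]

lemma curve_of_bij (K : Set (ℝ × ℝ)) (hK : IsCompact K) (f : K → AddCircle (1 : ℝ))
    (h1 : Continuous f) (h2 : Function.Bijective f) : IsJordanCurve K := by
  have : CompactSpace K := isCompact_iff_compactSpace.1 hK
  let e : K ≃ₜ AddCircle (1 : ℝ) :=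
    Continuous.homeoOfEquivCompactToT2 (f := Equiv.ofBijective f h2) h1
  refine ⟨fun t => (e.symm t : ℝ × ℝ), continuous_subtype_val.comp e.symm.continuous,
    Subtype.val_injective.comp e.symm.injective, ?_⟩
  ext w
  constructor
  · rintro ⟨t, rfl⟩; exact (e.symm t).2
  · intro hw
    exact ⟨e ⟨w, hw⟩, by simp⟩

/-- In any family of pairwise disjoint Peano continua in the plane, all but
countably many members are Jordan arcs or Jordan curves. -/
theorem peano_continua_ae_arcs_or_curves {ι : Type*} (K : ι → Set (ℝ × ℝ))
    (hcomp : ∀ i, IsCompact (K i)) (hconn : ∀ i, IsConnected (K i))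
    (hlc : ∀ i, LocallyConnectedSpace (K i))
    (hdisj : Pairwise (Function.onFun Disjoint K)) :
    Set.Countable {i | ¬ (IsJordanArc (K i) ∨ IsJordanCurve (K i))} := by
  have hsub : {i | ¬ (IsJordanArc (K i) ∨ IsJordanCurve (K i))} ⊆
      ⋃ d : Fin 3 → ℕ × ℕ, {i | GoodAt (K i) (ctr d) (rad d)} := by
    intro i hi
    have : CompactSpace (K i) := isCompact_iff_compactSpace.1 (hcomp i)
    have : ConnectedSpace (K i) := isConnected_iff_connectedSpace.1 (hconn i)
    have := hlc i
    have ht : HasTriod (K i) := by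
      by_contra ht
      apply hi
      rcases classify ht with ⟨h, h1, h2⟩ | ⟨f, h1, h2⟩
      · exact Or.inl (arc_of_inj _ (hcomp i) (hconn i) h h1 h2)
      · exact Or.inr (curve_of_bij _ (hcomp i) f h1 h2)
    exact mem_iUnion.2 (good_of_triod _ (hcomp i) ht)
  refine Set.Countable.mono hsub (countable_iUnion fun d => Set.Finite.countable ?_)
  by_contra hinf
  let φ := Set.Infinite.natEmbedding _ hinf
  refine no_three (fun t => K (φ t)) ?_ (ctr d) (rad d) (fun t => (φ t).2)
  intro t s hts
  apply hdisj
  intro e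
  exact hts (Fin.ext (φ.injective (Subtype.ext e)))
end

section
/- There is no uncountable collection of pairwise disjoint triods in the plane ℝ². -/
/-- A triod in the plane: the union of three non-degenerate Jordan arcs having
a common endpoint (the junction point) but otherwise pairwise disjoint. -/
def IsTriod (T : Set (ℝ × ℝ)) : Prop :=
  ∃ (p : ℝ × ℝ) (f : Fin 3 → ℝ → ℝ × ℝ),
    (∀ i, ContinuousOn (f i) (Set.Icc (0 : ℝ) 1) ∧
      Set.InjOn (f i) (Set.Icc (0 : ℝ) 1) ∧ f i 0 = p) ∧
    (∀ i j, i ≠ j →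
      (f i '' Set.Icc (0 : ℝ) 1) ∩ (f j '' Set.Icc (0 : ℝ) 1) = {p}) ∧
    T = ⋃ i, f i '' Set.Icc (0 : ℝ) 1

theorem arg_one_sub_exp_pos {δ : ℝ} (h0 : 0 < δ) (h1 : δ < 2 * Real.pi) :
    Complex.arg (1 - Complex.exp (δ * Complex.I)) = (δ - Real.pi) / 2 := by
  have hs : 0 < 2 * Real.sin (δ / 2) :=
    mul_pos two_pos (Real.sin_pos_of_pos_of_lt_pi (by linarith) (by linarith))
  have key : 1 - Complex.exp (δ * Complex.I) =
      ((2 * Real.sin (δ / 2) : ℝ) : ℂ) * (Complex.cos (((δ - Real.pi) / 2 : ℝ) : ℂ)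
        + Complex.sin (((δ - Real.pi) / 2 : ℝ) : ℂ) * Complex.I) := by
    rw [← Complex.ofReal_cos, ← Complex.ofReal_sin]
    have e1 : Real.cos ((δ - Real.pi) / 2) = Real.sin (δ / 2) := by
      rw [show (δ - Real.pi) / 2 = δ / 2 - Real.pi / 2 by ring, Real.cos_sub_pi_div_two]
    have e2 : Real.sin ((δ - Real.pi) / 2) = - Real.cos (δ / 2) := by
      rw [show (δ - Real.pi) / 2 = δ / 2 - Real.pi / 2 by ring, Real.sin_sub_pi_div_two]
    rw [e1, e2]
    have c2 : Real.cos δ = 1 - 2 * Real.sin (δ / 2) ^ 2 := by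
      rw [show δ = 2 * (δ / 2) by ring, Real.cos_two_mul, Real.cos_sq']; ring_nf
    have s2 : Real.sin δ = 2 * Real.sin (δ / 2) * Real.cos (δ / 2) := by
      rw [← Real.sin_two_mul]; ring_nf
    generalize Real.sin (δ / 2) = A at *
    generalize Real.cos (δ / 2) = B at *
    apply Complex.ext
    · simp [Complex.exp_ofReal_mul_I_re, c2]; ring
    · simp [Complex.exp_ofReal_mul_I_im, s2]
  rw [key, Complex.arg_mul_cos_add_sin_mul_I hs]
  constructor <;> linarith

theorem arg_one_sub_exp_neg {δ : ℝ} (h0 : δ < 0) (h1 : -(2 * Real.pi) < δ) :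
    Complex.arg (1 - Complex.exp (δ * Complex.I)) = (δ + Real.pi) / 2 := by
  have := arg_one_sub_exp_pos (δ := δ + 2 * Real.pi) (by linarith) (by linarith)
  have e : Complex.exp (((δ + 2 * Real.pi : ℝ) : ℂ) * Complex.I) = Complex.exp (δ * Complex.I) := by
    push_cast
    rw [add_mul, Complex.exp_periodic]
  rw [e] at this
  rw [this]; ring

theorem const_of_exp_const {h : ℝ → ℂ} (hc : Continuous h) {c : ℂ}
    (he : ∀ t, Complex.exp (h t) = c) : h 1 = h 0 := by
  have := Complex.isCoveringMap_exp.const_of_comp hc (A := ℝ) (by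
    intro a a'
    simp [he])
  exact this 1 0

theorem one_sub_slit {z : ℂ} (h : ‖z‖ ≤ 1) (h1 : z ≠ 1) : 1 - z ∈ Complex.slitPlane := by
  left
  have h2 : z.re ≤ 1 := (Complex.re_le_norm z).trans h
  rcases h2.lt_or_eq with h3 | h3
  · simpa using h3
  · exfalso
    apply h1
    have h4 : z.re ^ 2 + z.im ^ 2 ≤ 1 := by
      have := Complex.sq_norm z
      rw [Complex.normSq_apply] at this
      nlinarith [norm_nonneg z]
    rw [h3] at h4
    apply Complex.ext
    · simpa using h3
    · simp; nlinarith

theorem edge {L γ : ℝ → ℂ} (hL : Continuous L) (hγ : Continuous γ) {w c : ℂ} (hw : ‖w‖ = 1)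
    (hn : ∀ t, ‖γ t‖ ≤ 1) (hne : ∀ t, γ t ≠ w)
    (he : ∀ t, Complex.exp (L t) = c * (1 - γ t / w)) :
    (L 1).im - (L 0).im = Complex.arg (1 - γ 1 / w) - Complex.arg (1 - γ 0 / w) := by
  have hw0 : w ≠ 0 := by rintro rfl; simp at hw
  have hs : ∀ t, 1 - γ t / w ∈ Complex.slitPlane := fun t =>
    one_sub_slit (by simpa [hw] using hn t) (by
      intro h; rw [div_eq_one_iff_eq hw0] at h; exact hne t h)
  have h := const_of_exp_const (h := fun t => L t - Complex.log (1 - γ t / w)) (c := c)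
    (hL.sub (Continuous.clog (by fun_prop) hs)) (by
      intro t
      have := Complex.slitPlane_ne_zero (hs t)
      rw [Complex.exp_sub, Complex.exp_log this, he,
        mul_div_cancel_right₀ _ this])
  have h2 := congrArg Complex.im h
  simp only [Complex.sub_im, Complex.log_im] at h2
  linarith

theorem exists_lift_s4 {F : ℝ × ℝ → ℂ} (hF : Continuous F) (h0 : ∀ x, F x ≠ 0) :
    ∃ L : ℝ × ℝ → ℂ, Continuous L ∧ ∀ x, Complex.exp (L x) = F x := by
  obtain ⟨L, ⟨-, hL⟩, -⟩ := Complex.isCoveringMapOn_exp.existsUnique_continuousMap_lifts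
    (⟨F, hF⟩ : C(ℝ × ℝ, ℂ)) (a₀ := 0) (e₀ := Complex.log (F 0)) (Complex.exp_log (h0 0))
    (by intro a; simpa using h0 a)
  exact ⟨L, L.continuous, fun x => congrFun hL x⟩

theorem crossing {K₁ K₂ : Set ℂ} (h₁ : ∀ z ∈ K₁, ‖z‖ ≤ 1) (h₂ : ∀ z ∈ K₂, ‖z‖ ≤ 1)
    (hd : Disjoint K₁ K₂) {a b a' b' : ℝ} (hab : a < b) (hba : b < a') (hab' : a' < b')
    (hb : b' < a + 2 * Real.pi)
    (j₁ : JoinedIn K₁ (Complex.exp (a * Complex.I)) (Complex.exp (a' * Complex.I)))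
    (j₂ : JoinedIn K₂ (Complex.exp (b * Complex.I)) (Complex.exp (b' * Complex.I))) : False := by
  obtain ⟨g₁, m₁⟩ := j₁
  obtain ⟨g₂, m₂⟩ := j₂
  have M₁ : ∀ t, g₁.extend t ∈ K₁ := fun t => m₁ _
  have M₂ : ∀ t, g₂.extend t ∈ K₂ := fun t => m₂ _
  have ne : ∀ s t, g₁.extend s ≠ g₂.extend t := fun s t h =>
    Set.disjoint_left.1 hd (M₁ s) (h ▸ M₂ t)
  have c₁ : Continuous g₁.extend := g₁.continuous_extend
  have c₂ : Continuous g₂.extend := g₂.continuous_extend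
  obtain ⟨L, hL, he⟩ := exists_lift_s4 (F := fun x => g₁.extend x.1 - g₂.extend x.2)
    (by fun_prop) (fun x => sub_ne_zero.2 (ne _ _))
  have hn : ∀ x : ℝ, ‖Complex.exp (x * Complex.I)‖ = 1 := Complex.norm_exp_ofReal_mul_I
  have E1 := edge (L := fun s => L (s, 0)) (γ := g₁.extend) (by fun_prop) c₁ (hn b)
    (c := - Complex.exp (b * Complex.I)) (fun t => h₁ _ (M₁ t))
    (fun t => by simpa using ne t 0) (fun t => by
      have := Complex.exp_ne_zero (b * Complex.I)
      rw [he]; simp; field_simp; ring)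
  have E2 := edge (L := fun s => L (s, 1)) (γ := g₁.extend) (by fun_prop) c₁ (hn b')
    (c := - Complex.exp (b' * Complex.I)) (fun t => h₁ _ (M₁ t))
    (fun t => by simpa using ne t 1) (fun t => by
      have := Complex.exp_ne_zero (b' * Complex.I)
      rw [he]; simp; field_simp; ring)
  have E3 := edge (L := fun s => L (0, s)) (γ := g₂.extend) (by fun_prop) c₂ (hn a)
    (c := Complex.exp (a * Complex.I)) (fun t => h₂ _ (M₂ t))
    (fun t => by simpa using (ne 0 t).symm) (fun t => by
      have := Complex.exp_ne_zero (a * Complex.I)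
      rw [he]; simp; field_simp)
  have E4 := edge (L := fun s => L (1, s)) (γ := g₂.extend) (by fun_prop) c₂ (hn a')
    (c := Complex.exp (a' * Complex.I)) (fun t => h₂ _ (M₂ t))
    (fun t => by simpa using (ne 1 t).symm) (fun t => by
      have := Complex.exp_ne_zero (a' * Complex.I)
      rw [he]; simp; field_simp)
  have q : ∀ x y : ℝ, Complex.exp (x * Complex.I) / Complex.exp (y * Complex.I) =
      Complex.exp (((x - y : ℝ) : ℂ) * Complex.I) := by
    intro x y; rw [← Complex.exp_sub]; push_cast; ring_nf
  simp only [Path.extend_zero, Path.extend_one, q] at E1 E2 E3 E4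
  rw [arg_one_sub_exp_pos (by linarith) (by linarith),
    arg_one_sub_exp_neg (by linarith) (by linarith)] at E1
  rw [arg_one_sub_exp_neg (by linarith) (by linarith),
    arg_one_sub_exp_neg (by linarith) (by linarith)] at E2
  rw [arg_one_sub_exp_pos (by linarith) (by linarith),
    arg_one_sub_exp_pos (by linarith) (by linarith)] at E3
  rw [arg_one_sub_exp_pos (by linarith) (by linarith),
    arg_one_sub_exp_neg (by linarith) (by linarith)] at E4
  have := Real.pi_pos
  linarith

theorem exit_leg {f : ℝ → ℂ} (hf : ContinuousOn f (Set.Icc 0 1)) {c : ℂ} {r : ℝ}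
    (h0 : ‖f 0 - c‖ < r) (h1 : r < ‖f 1 - c‖) :
    ∃ t, 0 < t ∧ t ≤ 1 ∧ ‖f t - c‖ = r ∧ ∀ s ∈ Set.Icc 0 t, ‖f s - c‖ ≤ r := by
  have hg : ContinuousOn (fun t => ‖f t - c‖) (Set.Icc 0 1) := by fun_prop
  have hA : IsCompact (Set.Icc (0:ℝ) 1 ∩ (fun t => ‖f t - c‖) ⁻¹' Set.Ici r) :=
    isCompact_Icc.of_isClosed_subset
      (hg.preimage_isClosed_of_isClosed isClosed_Icc isClosed_Ici) Set.inter_subset_left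
  obtain ⟨t, ⟨⟨ht, hr⟩, hmin⟩⟩ := hA.exists_isLeast ⟨1, by simp, h1.le⟩
  have hr' : r ≤ ‖f t - c‖ := hr
  have hlt : ∀ s ∈ Set.Icc (0:ℝ) t, s ≠ t → ‖f s - c‖ < r := by
    intro s hs hne
    by_contra! hcon
    have := hmin ⟨⟨hs.1, hs.2.trans ht.2⟩, hcon⟩
    exact hne (le_antisymm hs.2 this)
  obtain ⟨s, hs, hsr⟩ := intermediate_value_Icc ht.1
    (hg.mono (Set.Icc_subset_Icc_right ht.2)) ⟨h0.le, hr'⟩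
  have hst : s = t := by
    by_contra hne
    exact (hlt s hs hne).ne hsr
  subst hst
  have hsr' : ‖f s - c‖ = r := hsr
  refine ⟨s, lt_of_le_of_ne ht.1 ?_, ht.2, hsr', ?_⟩
  · rintro rfl
    exact h0.ne hsr'
  · intro x hx
    by_cases hxs : x = s
    · rw [hxs, hsr']
    · exact (hlt x hx hxs).le

/-- Identification of the real plane with the complex numbers. -/
noncomputable def toC (x : ℝ × ℝ) : ℂ := Complex.equivRealProdCLM.symm x

theorem toC_inj : Function.Injective toC := Complex.equivRealProdCLM.symm.injective

theorem toC_cont : Continuous toC := Complex.equivRealProdCLM.symm.continuous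

/-- The rescaled part of `T` inside a disc. -/
def diskPart (T : Set (ℝ × ℝ)) (c : ℂ) (r : ℝ) : Set ℂ :=
  {w | ‖w‖ ≤ 1 ∧ ∃ x ∈ T, w = (toC x - c) / r}

/-- `T` contains, in the disc, a connected piece reaching three separated circle arcs. -/
def HasCode (T : Set (ℝ × ℝ)) (q : ℕ × ℚ × ℚ × ℚ) : Prop :=
  0 < q.2.1 ∧ ∃ (P : ℂ) (x y z : ℝ), -Real.pi < x ∧ x < q.2.2.1 ∧ (q.2.2.1 : ℝ) < y ∧
    y < q.2.2.2 ∧ (q.2.2.2 : ℝ) < z ∧ z ≤ Real.pi ∧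
    JoinedIn (diskPart T (TopologicalSpace.denseSeq ℂ q.1) q.2.1) P (Complex.exp (x * Complex.I)) ∧
    JoinedIn (diskPart T (TopologicalSpace.denseSeq ℂ q.1) q.2.1) P (Complex.exp (y * Complex.I)) ∧
    JoinedIn (diskPart T (TopologicalSpace.denseSeq ℂ q.1) q.2.1) P (Complex.exp (z * Complex.I))

theorem diskPart_disjoint {T T' : Set (ℝ × ℝ)} (h : Disjoint T T') {c : ℂ} {r : ℝ} (hr : 0 < r) :
    Disjoint (diskPart T c r) (diskPart T' c r) := by
  rw [Set.disjoint_left]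
  rintro w ⟨-, x, hx, rfl⟩ ⟨-, y, hy, he⟩
  have hr' : (r : ℂ) ≠ 0 := by exact_mod_cast hr.ne'
  have : toC x = toC y := by
    rw [div_left_inj' hr'] at he
    exact sub_left_injective he
  exact Set.disjoint_left.1 h hx (toC_inj this ▸ hy)

theorem code_clash {T T' : Set (ℝ × ℝ)} (h : Disjoint T T') {q : ℕ × ℚ × ℚ × ℚ}
    (h₁ : HasCode T q) (h₂ : HasCode T' q) : False := by
  obtain ⟨hr, P, x, y, z, hx0, hxu, huy, hyv, hvz, hz, jx, jy, jz⟩ := h₁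
  obtain ⟨-, P', x', y', z', hx0', hxu', huy', hyv', hvz', hz', jx', jy', jz'⟩ := h₂
  have hd := diskPart_disjoint h (c := TopologicalSpace.denseSeq ℂ q.1) (r := q.2.1)
    (by exact_mod_cast hr)
  rcases lt_trichotomy x x' with hlt | heq | hlt
  · exact crossing (fun z hz => hz.1) (fun z hz => hz.1) hd hlt (by linarith)
      (by linarith) (by linarith) (jx.symm.trans jy) (jx'.symm.trans jz')
  · subst heq
    exact Set.disjoint_left.1 hd jx.mem.2 jx'.mem.2
  · exact crossing (fun z hz => hz.1) (fun z hz => hz.1) hd.symm hlt (by linarith)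
      (by linarith) (by linarith) (jx'.symm.trans jy') (jx.symm.trans jz)

theorem exists_sorted (α : Fin 3 → ℝ) (h : Function.Injective α) :
    ∃ i j k, α i < α j ∧ α j < α k := by
  have h01 : α 0 ≠ α 1 := fun e => by simpa using h e
  have h02 : α 0 ≠ α 2 := fun e => by simpa using h e
  have h12 : α 1 ≠ α 2 := fun e => by simpa using h e
  rcases lt_or_gt_of_ne h01 with a | a <;> rcases lt_or_gt_of_ne h02 with b | b <;>
    rcases lt_or_gt_of_ne h12 with d | d
  · exact ⟨0, 1, 2, a, d⟩
  · exact ⟨0, 2, 1, b, d⟩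
  · exact ⟨0, 1, 2, a, d⟩
  · exact ⟨2, 0, 1, b, a⟩
  · exact ⟨1, 0, 2, a, b⟩
  · exact ⟨1, 0, 2, a, b⟩
  · exact ⟨1, 2, 0, d, b⟩
  · exact ⟨2, 1, 0, d, a⟩

theorem exists_code {T : Set (ℝ × ℝ)} (hT : IsTriod T) : ∃ q, HasCode T q := by
  obtain ⟨p, f, hf, hd, rfl⟩ := hT
  have hpos : ∀ i, 0 < ‖toC (f i 1) - toC p‖ := by
    intro i
    rw [norm_pos_iff, sub_ne_zero]
    intro e
    have e1 : f i 1 = f i 0 := by rw [(hf i).2.2]; exact toC_inj e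
    have := (hf i).2.1 (by simp) (by simp) e1
    norm_num at this
  obtain ⟨r, hr0, hr⟩ : ∃ r : ℚ, 0 < r ∧ ∀ i, 2 * (r : ℝ) < ‖toC (f i 1) - toC p‖ := by
    obtain ⟨i, -, hi⟩ := Finset.exists_min_image Finset.univ
      (fun i => ‖toC (f i 1) - toC p‖) ⟨0, Finset.mem_univ _⟩
    obtain ⟨r, h1, h2⟩ := exists_rat_btwn (half_pos (hpos i))
    exact ⟨r, by exact_mod_cast h1, fun j => by have := hi j (Finset.mem_univ _); linarith⟩
  have hr0' : (0:ℝ) < r := by exact_mod_cast hr0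
  obtain ⟨n, hn⟩ : ∃ n, ‖toC p - TopologicalSpace.denseSeq ℂ n‖ < r := by
    obtain ⟨n, hy⟩ := (TopologicalSpace.denseRange_denseSeq ℂ).exists_dist_lt (toC p) hr0'
    exact ⟨n, by rwa [dist_eq_norm] at hy⟩
  set c := TopologicalSpace.denseSeq ℂ n with hc
  have hout : ∀ i, (r:ℝ) < ‖toC (f i 1) - c‖ := by
    intro i
    have h1 : ‖toC (f i 1) - toC p‖ ≤ ‖toC (f i 1) - c‖ + ‖toC p - c‖ := by
      rw [show toC (f i 1) - toC p = (toC (f i 1) - c) - (toC p - c) by ring]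
      exact norm_sub_le _ _
    have := hr i
    linarith
  have hlegs : ∀ i, ∃ t, 0 < t ∧ t ≤ 1 ∧ ‖toC (f i t) - c‖ = r ∧
      ∀ s ∈ Set.Icc 0 t, ‖toC (f i s) - c‖ ≤ r := fun i =>
    exit_leg (f := fun t => toC (f i t)) (toC_cont.comp_continuousOn (hf i).1)
      (by rw [(hf i).2.2]; exact hn) (hout i)
  choose t ht0 ht1 hte hts using hlegs
  have hrC : ((r:ℝ):ℂ) ≠ 0 := by exact_mod_cast hr0.ne'
  set w : Fin 3 → ℂ := fun i => (toC (f i (t i)) - c) / ((r:ℝ):ℂ) with hw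
  have hwn : ∀ i, ‖w i‖ = 1 := by
    intro i
    simp only [hw, norm_div, hte, Complex.norm_real, Real.norm_eq_abs, abs_of_pos hr0']
    exact div_self hr0'.ne'
  have hexp : ∀ i, Complex.exp (Complex.arg (w i) * Complex.I) = w i := by
    intro i
    have := Complex.norm_mul_exp_arg_mul_I (w i)
    rwa [hwn, Complex.ofReal_one, one_mul] at this
  have hinj : Function.Injective (fun i => Complex.arg (w i)) := by
    intro i j hij
    by_contra hne
    have h1 : w i = w j := by rw [← hexp i, ← hexp j]; simp only at hij; rw [hij]
    simp only [hw] at h1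
    rw [div_left_inj' hrC] at h1
    have h2 : f i (t i) = f j (t j) := toC_inj (sub_left_injective h1)
    have h3 : f i (t i) ∈ ({p} : Set (ℝ × ℝ)) := by
      rw [← hd i j hne]
      exact ⟨⟨t i, ⟨(ht0 i).le, ht1 i⟩, rfl⟩, ⟨t j, ⟨(ht0 j).le, ht1 j⟩, h2.symm⟩⟩
    have h4 : f i (t i) = f i 0 := by rw [(hf i).2.2]; exact h3
    exact (ht0 i).ne' ((hf i).2.1 ⟨(ht0 i).le, ht1 i⟩ (by simp) h4)
  have hj : ∀ i, JoinedIn (diskPart (⋃ i, f i '' Set.Icc (0 : ℝ) 1) c r) ((toC p - c) / ((r:ℝ):ℂ))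
      (Complex.exp (Complex.arg (w i) * Complex.I)) := by
    intro i
    rw [hexp]
    have hmaps : ∀ s ∈ Set.Icc (0:ℝ) 1, s * t i ∈ Set.Icc 0 (t i) := fun s hs =>
      ⟨mul_nonneg hs.1 (ht0 i).le, by nlinarith [hs.2, ht0 i]⟩
    apply JoinedIn.ofLine (f := fun s => (toC (f i (s * t i)) - c) / ((r:ℝ):ℂ))
    · apply ContinuousOn.div_const
      apply ContinuousOn.sub _ continuousOn_const
      apply toC_cont.comp_continuousOn
      apply (hf i).1.comp (by fun_prop)
      intro s hs
      exact Set.Icc_subset_Icc_right (ht1 i) (hmaps s hs)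
    · simp [(hf i).2.2]
    · simp [hw]
    · rintro _ ⟨s, hs, rfl⟩
      refine ⟨?_, f i (s * t i), Set.mem_iUnion.2 ⟨i, s * t i,
        Set.Icc_subset_Icc_right (ht1 i) (hmaps s hs), rfl⟩, rfl⟩
      rw [norm_div, Complex.norm_real, Real.norm_eq_abs, abs_of_pos hr0', div_le_one hr0']
      exact hts i _ (hmaps s hs)
  obtain ⟨i, j, k, hij, hjk⟩ := exists_sorted _ hinj
  obtain ⟨u, hu1, hu2⟩ := exists_rat_btwn hij
  obtain ⟨v, hv1, hv2⟩ := exists_rat_btwn hjk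
  exact ⟨(n, r, u, v), hr0, _, _, _, _, Complex.neg_pi_lt_arg _, hu1, hu2, hv1, hv2,
    Complex.arg_le_pi _, hj i, hj j, hj k⟩

/-- Moore's theorem: there is no uncountable collection of pairwise disjoint
triods in the plane. -/
theorem moore_no_uncountable_disjoint_triods (S : Set (Set (ℝ × ℝ)))
    (htriod : ∀ T ∈ S, IsTriod T)
    (hdisj : S.Pairwise Disjoint) :
    S.Countable := by
  have h : ∀ T : S, ∃ q, HasCode T.1 q := fun T => exists_code (htriod T.1 T.2)
  choose q hq using h
  have hinj : Function.Injective q := by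
    intro A B hAB
    by_contra hne
    exact code_clash (hdisj A.2 B.2 (fun e => hne (Subtype.ext e))) (hq A) (hAB ▸ hq B)
  exact Set.countable_coe_iff.1 hinj.countable
end

section
/- Let X be a topological space homeomorphic to the 2-sphere S² and let K ⊆ X be a compact set separating two points a, b ∈ X \ K (i.e. a and b lie in different components of X \ K). Then there exists a connected component of K that separates a and b. -/
open Set Topology

namespace SphereSep

abbrev S2 := Metric.sphere (0 : EuclideanSpace ℝ (Fin 3)) 1

instance fact_finrank : Fact (Module.finrank ℝ (EuclideanSpace ℝ (Fin 3)) = 2 + 1) :=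
  ⟨by simp⟩

lemma exp_const {X : Type*} [TopologicalSpace X] {s : Set X} (hs : IsPreconnected s)
    {g : X → ℝ} (hg : ContinuousOn g s) (h1 : ∀ x ∈ s, Circle.exp (g x) = 1)
    {a b : X} (ha : a ∈ s) (hb : b ∈ s) : g a = g b :=
  Circle.isCoveringMap_exp.constOn_of_comp hs hg
    (fun x hx y hy => (h1 x hx).trans (h1 y hy).symm) ha hb

lemma lift_punctured (h : C(S2, Circle)) (v : S2) :
    ∃ t : S2 → ℝ, ContinuousOn t {v}ᶜ ∧ ∀ x ∈ ({v}ᶜ : Set S2), Circle.exp (t x) = h x := by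
  let c := stereographic' 2 v
  have hsrc : c.source = {v}ᶜ := stereographic'_source v
  have htgt : c.target = univ := stereographic'_target v
  have hcs : Continuous c.symm := by
    rw [← continuousOn_univ, ← htgt]; exact c.continuousOn_symm
  let f : C(EuclideanSpace ℝ (Fin 2), Circle) := ⟨fun x => h (c.symm x), h.continuous.comp hcs⟩
  obtain ⟨r, hr⟩ : ∃ r, Circle.exp r = f 0 := ⟨_, Circle.exp_arg _⟩
  obtain ⟨F, ⟨-, hF⟩, -⟩ := Circle.isCoveringMap_exp.existsUnique_continuousMap_lifts f 0 r hr
  refine ⟨fun x => F (c x), ?_, ?_⟩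
  · rw [← hsrc]; exact F.continuous.comp_continuousOn c.continuousOn
  · intro x hx
    rw [← hsrc] at hx
    have := congrFun hF (c x)
    simp only [Function.comp] at this
    rw [this]
    change h (c.symm (c x)) = h x
    rw [c.left_inv hx]

lemma two_punctured (v : S2) : IsPreconnected ({v}ᶜ ∩ {-v}ᶜ : Set S2) := by
  let c := stereographic' 2 v
  have hsrc : c.source = {v}ᶜ := stereographic'_source v
  have htgt : c.target = univ := stereographic'_target v
  have hcs : Continuous c.symm := by
    rw [← continuousOn_univ, ← htgt]; exact c.continuousOn_symm
  have hv : -v ∈ c.source := by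
    rw [hsrc]; intro h
    exact (ne_neg_of_mem_unit_sphere ℝ v) h.symm
  have h1 : IsConnected ({c (-v)}ᶜ : Set (EuclideanSpace ℝ (Fin 2))) := by
    apply isConnected_compl_singleton_of_one_lt_rank
    rw [← Module.finrank_eq_rank]; simp
  have := h1.isPreconnected.image _ hcs.continuousOn
  convert this using 1
  ext x
  constructor
  · rintro ⟨h1, h2⟩
    rw [← hsrc] at h1
    refine ⟨c x, fun h => h2 (c.injOn h1 hv h), c.left_inv h1⟩
  · rintro ⟨y, hy, rfl⟩
    have hy' : y ∈ c.target := htgt ▸ mem_univ y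
    refine ⟨hsrc ▸ c.map_target hy', fun h => hy ?_⟩
    rw [mem_singleton_iff] at h ⊢
    rw [← h, c.right_inv hy']

lemma lift_sphere (h : C(S2, Circle)) : ∃ t : S2 → ℝ, Continuous t ∧ ∀ x, Circle.exp (t x) = h x := by
  classical
  have hne : (Metric.sphere (0 : EuclideanSpace ℝ (Fin 3)) 1).Nonempty :=
    NormedSpace.sphere_nonempty.2 zero_le_one
  obtain ⟨v0, hv0⟩ := hne
  let v : S2 := ⟨v0, hv0⟩
  have hvv : v ≠ -v := ne_neg_of_mem_unit_sphere ℝ v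
  obtain ⟨t1, c1, e1⟩ := lift_punctured h v
  obtain ⟨t2, c2, e2⟩ := lift_punctured h (-v)
  obtain ⟨n, hn1, hn⟩ : ∃ n : ℝ, Circle.exp n = 1 ∧ ∀ x ∈ ({v}ᶜ ∩ {-v}ᶜ : Set S2), t1 x = t2 x + n := by
    have hE : ∀ x ∈ ({v}ᶜ ∩ {-v}ᶜ : Set S2), Circle.exp (t1 x - t2 x) = 1 := by
      intro x hx
      rw [Circle.exp_sub, e1 x hx.1, e2 x hx.2, div_self']
    rcases ({v}ᶜ ∩ {-v}ᶜ : Set S2).eq_empty_or_nonempty with h0 | ⟨y, hy⟩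
    · exact ⟨0, by simp, by simp [h0]⟩
    · refine ⟨t1 y - t2 y, hE y hy, fun x hx => ?_⟩
      have := exp_const (two_punctured v) (g := fun x => t1 x - t2 x)
        ((c1.mono inter_subset_left).sub (c2.mono inter_subset_right)) hE hx hy
      linarith
  let t : S2 → ℝ := fun x => if x = v then t2 x + n else t1 x
  have ht1 : EqOn t t1 {v}ᶜ := fun x hx => if_neg hx
  have ht2 : EqOn t (fun x => t2 x + n) {-v}ᶜ := by
    intro x hx
    by_cases hxv : x = v
    · exact if_pos hxv
    · exact (if_neg hxv).trans (hn x ⟨hxv, hx⟩)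
  refine ⟨t, ?_, ?_⟩
  · rw [continuous_iff_continuousAt]
    intro x
    by_cases hxv : x = v
    · have hx : x ∈ ({-v}ᶜ : Set S2) := by rw [hxv]; exact hvv
      exact ((c2.add continuousOn_const).congr ht2).continuousAt (isOpen_compl_singleton.mem_nhds hx)
    · exact (c1.congr ht1).continuousAt (isOpen_compl_singleton.mem_nhds hxv)
  · intro x
    by_cases hxv : x = v
    · have hx : x ∈ ({-v}ᶜ : Set S2) := by rw [hxv]; exact hvv
      rw [ht2 hx, Circle.exp_add, hn1, mul_one, e2 x hx]
    · rw [ht1 hxv, e1 x hxv]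

/-- `a` and `b` lie in a connected set missing `S`. -/
def Joined' {X : Type*} [TopologicalSpace X] (a b : X) (S : Set X) : Prop :=
  ∃ D : Set X, IsPreconnected D ∧ a ∈ D ∧ b ∈ D ∧ Disjoint D S

lemma Joined'.mono {X : Type*} [TopologicalSpace X] {a b : X} {S T : Set X} (h : S ⊆ T)
    (hT : Joined' a b T) : Joined' a b S := by
  obtain ⟨D, h1, h2, h3, h4⟩ := hT
  exact ⟨D, h1, h2, h3, h4.mono_right h⟩

lemma joined_iff {X : Type*} [TopologicalSpace X] {a b : X} {S : Set X} (ha : a ∉ S) (hb : b ∉ S) :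
    Joined' a b S ↔ connectedComponentIn Sᶜ a = connectedComponentIn Sᶜ b := by
  constructor
  · rintro ⟨D, h1, h2, h3, h4⟩
    exact connectedComponentIn_eq
      (h1.subset_connectedComponentIn h2 (subset_compl_iff_disjoint_right.2 h4) h3)
  · intro h
    exact ⟨connectedComponentIn Sᶜ a, isPreconnected_connectedComponentIn,
      mem_connectedComponentIn ha, h ▸ mem_connectedComponentIn hb,
      subset_compl_iff_disjoint_right.1 (connectedComponentIn_subset _ _)⟩

/-- The Janiszewski theorem for disjoint closed sets. -/
lemma janiszewski {X : Type*} [TopologicalSpace X] [NormalSpace X] [LocallyConnectedSpace X]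
    (lift : ∀ h : C(X, Circle), ∃ t : X → ℝ, Continuous t ∧ ∀ x, Circle.exp (t x) = h x)
    {a b : X} {A B : Set X} (hA : IsClosed A) (hB : IsClosed B) (hAB : Disjoint A B)
    (jA : Joined' a b A) (jB : Joined' a b B) : Joined' a b (A ∪ B) := by
  classical
  obtain ⟨DA, pA, aA, bA, dA⟩ := jA
  obtain ⟨DB, pB, aB, bB, dB⟩ := jB
  have ha : a ∉ A ∪ B := fun h => h.elim (disjoint_left.1 dA aA) (disjoint_left.1 dB aB)
  have hb : b ∉ A ∪ B := fun h => h.elim (disjoint_left.1 dA bA) (disjoint_left.1 dB bB)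
  have hO : IsOpen (A ∪ B)ᶜ := (hA.union hB).isOpen_compl
  let W := connectedComponentIn (A ∪ B)ᶜ a
  have hW : IsOpen W := hO.connectedComponentIn
  have haW : a ∈ W := mem_connectedComponentIn ha
  by_cases hbW : b ∈ W
  · exact ⟨W, isPreconnected_connectedComponentIn, haW, hbW,
      subset_compl_iff_disjoint_right.1 (connectedComponentIn_subset _ _)⟩
  exfalso
  have hfr : ∀ x ∈ frontier W, x ∈ A ∪ B := by
    intro x hx
    by_contra hxn
    have hx1 : x ∈ closure W := hx.1
    obtain ⟨y, hy1, hy2⟩ := mem_closure_iff.1 hx1 (connectedComponentIn (A ∪ B)ᶜ x)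
      hO.connectedComponentIn (mem_connectedComponentIn hxn)
    have e1 := connectedComponentIn_eq hy1
    have e2 := connectedComponentIn_eq hy2
    have : x ∈ W := by
      change x ∈ connectedComponentIn (A ∪ B)ᶜ a
      rw [e2, ← e1]; exact mem_connectedComponentIn hxn
    exact hx.2 (hW.interior_eq.symm ▸ this)
  obtain ⟨l, l0, l1, -⟩ := exists_continuous_zero_one_of_isClosed hB hA hAB.symm
  let h : X → Circle := fun x => if x ∈ W then Circle.exp (2 * Real.pi * l x) else 1
  have hh : Continuous h := by
    refine Continuous.if ?_ (by fun_prop) continuous_const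
    intro x hx
    rcases hfr x hx with hx | hx
    · simp [l1 hx]
    · simp [l0 hx]
  obtain ⟨t, ct, et⟩ := lift ⟨h, hh⟩
  have et' : ∀ x, Circle.exp (t x) = h x := et
  have k1 := exp_const pA (g := fun x => (if x ∈ W then 2 * Real.pi * l x else 0) - t x)
    (by
      refine ContinuousOn.sub (ContinuousOn.if ?_ (by fun_prop) continuousOn_const) ct.continuousOn
      rintro x ⟨hxD, hx⟩
      rcases hfr x hx with hx | hx
      · exact (disjoint_left.1 dA hxD hx).elim
      · simp [l0 hx])
    (by
      intro x _
      rw [Circle.exp_sub, et']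
      by_cases hx : x ∈ W <;> simp [h, hx]) aA bA
  have k2 := exp_const pB (g := fun x => (if x ∈ W then 2 * Real.pi * l x - 2 * Real.pi else 0) - t x)
    (by
      refine ContinuousOn.sub (ContinuousOn.if ?_ (by fun_prop) continuousOn_const) ct.continuousOn
      rintro x ⟨hxD, hx⟩
      rcases hfr x hx with hx | hx
      · simp [l1 hx]
      · exact (disjoint_left.1 dB hxD hx).elim)
    (by
      intro x _
      rw [Circle.exp_sub, et']
      by_cases hx : x ∈ W <;> simp [h, hx, Circle.exp_sub]) aB bB
  simp only [haW, hbW, if_true, if_false] at k1 k2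
  have := Real.pi_pos
  linarith

lemma main {X : Type*} [TopologicalSpace X] [CompactSpace X] [T2Space X]
    [LocallyPathConnectedSpace X] [PreconnectedSpace X]
    (lift : ∀ h : C(X, Circle), ∃ t : X → ℝ, Continuous t ∧ ∀ x, Circle.exp (t x) = h x)
    {a b : X} {K : Set X} (hK : IsCompact K)
    (hj : ∀ x ∈ K, Joined' a b (connectedComponentIn K x)) : Joined' a b K := by
  classical
  have : CompactSpace K := isCompact_iff_compactSpace.1 hK
  have hZ : ∀ x : K, ∃ Z : Set K, IsClopen Z ∧ x ∈ Z ∧ Joined' a b (Subtype.val '' Z) := by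
    intro x
    obtain ⟨D, pD, aD, bD, dD⟩ := hj x x.2
    have hcomp : connectedComponentIn K (x : X) = Subtype.val '' connectedComponent x := by
      rw [connectedComponentIn_eq_image x.2]
    have hcl : IsClosed (connectedComponentIn K (x : X)) := by
      rw [hcomp]
      exact (isClosed_connectedComponent.isCompact.image continuous_subtype_val).isClosed
    set C := connectedComponentIn K (x : X) with hC
    have hD : D ⊆ Cᶜ := subset_compl_iff_disjoint_right.2 dD
    have hopen : IsOpen (connectedComponentIn Cᶜ a) := hcl.isOpen_compl.connectedComponentIn
    have hcon : IsConnected (connectedComponentIn Cᶜ a) :=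
      isConnected_connectedComponentIn_iff.2 (hD aD)
    have hpc := (hopen.isConnected_iff_isPathConnected).1 hcon
    obtain ⟨γ, hγ⟩ := hpc.joinedIn a (mem_connectedComponentIn (hD aD)) b
      (pD.subset_connectedComponentIn aD hD bD)
    have hP : IsCompact (range γ) := isCompact_range γ.continuous
    have hPC : ∀ y ∈ range γ, y ∉ C := by
      rintro _ ⟨s, rfl⟩
      exact connectedComponentIn_subset _ _ (hγ s)
    have hP' : IsClosed (Subtype.val ⁻¹' range γ : Set K) := hP.isClosed.preimage continuous_subtype_val
    have key : ∃ Z : Set K, IsClopen Z ∧ x ∈ Z ∧ Z ⊆ (Subtype.val ⁻¹' range γ : Set K)ᶜ := by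
      have hsub : (⋂ s : { s : Set K // IsClopen s ∧ x ∈ s }, (s : Set K))
          ⊆ (Subtype.val ⁻¹' range γ : Set K)ᶜ := by
        rw [← connectedComponent_eq_iInter_isClopen]
        intro y hy hy'
        exact hPC _ hy' (hcomp ▸ ⟨y, hy, rfl⟩)
      have : Nonempty { s : Set K // IsClopen s ∧ x ∈ s } := ⟨⟨univ, isClopen_univ, mem_univ _⟩⟩
      obtain ⟨Z, hZ⟩ := exists_subset_nhds_of_compactSpace
        (V := fun s : { s : Set K // IsClopen s ∧ x ∈ s } => (s : Set K))
        (by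
          intro s s'
          exact ⟨⟨s.1 ∩ s'.1, s.2.1.inter s'.2.1, s.2.2, s'.2.2⟩, inter_subset_left, inter_subset_right⟩)
        (fun s => s.2.1.isClosed)
        (U := (Subtype.val ⁻¹' range γ : Set K)ᶜ)
        (fun y hy => hP'.isOpen_compl.mem_nhds (hsub hy))
      exact ⟨Z.1, Z.2.1, Z.2.2, hZ⟩
    obtain ⟨Z, h1, h2, h3⟩ := key
    refine ⟨Z, h1, h2, range γ, isPreconnected_range γ.continuous, ⟨0, γ.source⟩, ⟨1, γ.target⟩, ?_⟩
    rw [disjoint_right]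
    rintro _ ⟨z, hz, rfl⟩ hz'
    exact h3 hz hz'
  choose Z hZ1 hZ2 hZ3 using hZ
  obtain ⟨T, hT⟩ := isCompact_univ.elim_finite_subcover Z (fun x => (hZ1 x).isOpen)
    (fun x _ => mem_iUnion.2 ⟨x, hZ2 x⟩)
  have hclo : ∀ Y : Set K, IsClosed Y → IsClosed (Subtype.val '' Y : Set X) := fun Y hY =>
    (hY.isCompact.image continuous_subtype_val).isClosed
  have ind : ∀ T : Finset K, Joined' a b (Subtype.val '' (⋃ i ∈ T, Z i)) := by
    intro T
    induction T using Finset.induction_on with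
    | empty => exact ⟨univ, isPreconnected_univ, mem_univ _, mem_univ _, by simp⟩
    | insert i T hi ih =>
      have hU : IsClopen (⋃ i ∈ T, Z i) := isClopen_biUnion_finset fun j _ => hZ1 j
      have := janiszewski lift (hclo _ (hZ1 i).isClosed)
        (hclo _ (hU.diff (hZ1 i)).isClosed)
        ((disjoint_image_iff Subtype.val_injective).2 disjoint_sdiff_right) (hZ3 i)
        (ih.mono (image_mono sdiff_subset))
      rwa [← image_union, union_sdiff_self, ← Finset.set_biUnion_insert] at this
  refine (ind T).mono ?_
  intro x hx
  exact ⟨⟨x, hx⟩, hT (mem_univ _), rfl⟩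

end SphereSep

/-- If a compact set `K` separates two points in a topological 2-sphere, then
some connected component of `K` already separates them. -/
theorem component_separates_sphere {X : Type*} [TopologicalSpace X]
    (e : X ≃ₜ Metric.sphere (0 : EuclideanSpace ℝ (Fin 3)) 1)
    (K : Set X) (hK : IsCompact K) (a b : X) (ha : a ∉ K) (hb : b ∉ K)
    (hsep : connectedComponentIn Kᶜ a ≠ connectedComponentIn Kᶜ b) :
    ∃ x ∈ K, connectedComponentIn (connectedComponentIn K x)ᶜ a ≠
      connectedComponentIn (connectedComponentIn K x)ᶜ b := by
  have : CompactSpace X := e.symm.compactSpace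
  have : T2Space X := e.symm.t2Space
  have : LocallyPathConnectedSpace SphereSep.S2 :=
    ChartedSpace.locallyPathConnectedSpace (EuclideanSpace ℝ (Fin 2)) SphereSep.S2
  have : LocallyPathConnectedSpace X := e.isOpenEmbedding.locallyPathConnectedSpace
  have : PreconnectedSpace SphereSep.S2 := by
    apply isPreconnected_iff_preconnectedSpace.1
    refine (isConnected_sphere ?_ _ zero_le_one).isPreconnected
    rw [← Module.finrank_eq_rank]; simp
  have : PreconnectedSpace X := e.symm.surjective.denseRange.preconnectedSpace e.symm.continuous
  by_contra! hcon
  apply hsep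
  rw [← SphereSep.joined_iff ha hb]
  refine SphereSep.main ?_ hK ?_
  · intro h
    obtain ⟨t, ct, et⟩ := SphereSep.lift_sphere ⟨fun x => h (e.symm x), by fun_prop⟩
    refine ⟨fun x => t (e x), by fun_prop, fun x => ?_⟩
    rw [et]; simp
  · intro x hx
    have hs := connectedComponentIn_subset K x
    exact (SphereSep.joined_iff (fun h => ha (hs h)) (fun h => hb (hs h))).2 (hcon x hx)
end
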